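/- arXiv:1011.4725 — 2 statements merged into one kernel-verified Lean document; each statement's English description precedes it below -/
import Mathlib

section
/- For the doubly symmetric binary source with crossover probability ρ ∈ [0,1/2] and Hamming distortions, with d* = 1/2 − (1/2)√(1−2ρ), for every d ∈ (d*, 1/2] the common-reconstruction rate-distortion function satisfies both R_CR(d,d) ≠ h(ρ) − h(d) and R_CR(d,d) ≤ h(d) − ρ − (1−ρ)·h((2d−ρ)/(2(1−ρ))). -/
open scoped BigOperators Classical

noncomputable section

namespace TWR

/-- Base-2 Shannon entropy of a finitely supported distribution (with the
convention `0 * log 0 = 0`, automatic since `Real.logb 2 0 = 0`). -/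
def H2 {α : Type} [Fintype α] (p : α → ℝ) : ℝ :=
  -∑ a, p a * Real.logb 2 (p a)

/-- `p` is a probability mass function. -/
def IsPmf {α : Type} [Fintype α] (p : α → ℝ) : Prop :=
  (∀ a, 0 ≤ p a) ∧ ∑ a, p a = 1

/-- `W` is a conditional pmf. -/
def IsCondPmf {α β : Type} [Fintype β] (W : α → β → ℝ) : Prop :=
  ∀ a, IsPmf (W a)

/-- Mutual information `I(A;B)` (base 2) of a joint pmf on `α × β`. -/
def MI {α β : Type} [Fintype α] [Fintype β] (p : α × β → ℝ) : ℝ :=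
  H2 (fun a => ∑ b, p (a, b)) + H2 (fun b => ∑ a, p (a, b)) - H2 p

/-- Conditional entropy `H(A|B)` of a joint pmf on `α × β`. -/
def condH {α β : Type} [Fintype α] [Fintype β] (p : α × β → ℝ) : ℝ :=
  H2 p - H2 (fun b => ∑ a, p (a, b))

/-- Conditional mutual information `I(A;C|B)` of a joint pmf on `α × β × γ`,
conditioning on the middle coordinate (`I(A;C|B) = H(A,B)+H(B,C)-H(A,B,C)-H(B)`). -/
def condMI {α β γ : Type} [Fintype α] [Fintype β] [Fintype γ] (p : α × β × γ → ℝ) : ℝ :=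
  H2 (fun ab : α × β => ∑ c, p (ab.1, ab.2, c)) +
    H2 (fun bc : β × γ => ∑ a, p (a, bc.1, bc.2)) -
    H2 p - H2 (fun b : β => ∑ a, ∑ c, p (a, b, c))

/-- Markov chain `A − B − C` for a joint pmf on `α × β × γ`. -/
def Markov {α β γ : Type} [Fintype α] [Fintype β] [Fintype γ] (p : α × β × γ → ℝ) : Prop :=
  ∀ a b c, p (a, b, c) * (∑ a', ∑ c', p (a', b, c')) =
    (∑ c', p (a, b, c')) * (∑ a', p (a', b, c))

variable {𝒳 𝒴 Xh Yh 𝒲 𝒰 𝒱 : Type}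
variable [Fintype 𝒳] [Fintype 𝒴] [Fintype Xh] [Fintype Yh]
variable [Fintype 𝒲] [Fintype 𝒰] [Fintype 𝒱]

/-- The i.i.d. block source. -/
def iid (q : 𝒳 × 𝒴 → ℝ) (n : ℕ) : (Fin n → 𝒳) × (Fin n → 𝒴) → ℝ :=
  fun xy => ∏ i, q (xy.1 i, xy.2 i)

/-- Average distortion at receiver 1 of the RD code `(f, g1, ·)`. -/
def Delta1 (q : 𝒳 × 𝒴 → ℝ) (δ1 : 𝒳 → Xh → ℝ) {n m : ℕ}
    (f : (Fin n → 𝒳) × (Fin n → 𝒴) → Fin m)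
    (g1 : Fin m × (Fin n → 𝒴) → Fin n → Xh) : ℝ :=
  ∑ xy : (Fin n → 𝒳) × (Fin n → 𝒴),
    iid q n xy * ((n : ℝ)⁻¹ * ∑ i, δ1 (xy.1 i) (g1 (f xy, xy.2) i))

/-- Average distortion at receiver 2 of the RD code `(f, ·, g2)`. -/
def Delta2 (q : 𝒳 × 𝒴 → ℝ) (δ2 : 𝒴 → Yh → ℝ) {n m : ℕ}
    (f : (Fin n → 𝒳) × (Fin n → 𝒴) → Fin m)
    (g2 : Fin m × (Fin n → 𝒳) → Fin n → Yh) : ℝ :=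
  ∑ xy : (Fin n → 𝒳) × (Fin n → 𝒴),
    iid q n xy * ((n : ℝ)⁻¹ * ∑ i, δ2 (xy.2 i) (g2 (f xy, xy.1) i))

/-- `r` is a `(d1,d2)`-achievable rate (source coding). -/
def RDAchievable (q : 𝒳 × 𝒴 → ℝ) (δ1 : 𝒳 → Xh → ℝ) (δ2 : 𝒴 → Yh → ℝ)
    (d1 d2 r : ℝ) : Prop :=
  ∀ ε > (0 : ℝ), ∃ (n m : ℕ) (f : (Fin n → 𝒳) × (Fin n → 𝒴) → Fin m)
    (g1 : Fin m × (Fin n → 𝒴) → Fin n → Xh)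
    (g2 : Fin m × (Fin n → 𝒳) → Fin n → Yh),
    0 < n ∧ Real.logb 2 m / n ≤ r + ε ∧
    Delta1 q δ1 f g1 ≤ d1 + ε ∧ Delta2 q δ2 f g2 ≤ d2 + ε

/-- The rate-distortion function `R(d1,d2)`. -/
def RD (q : 𝒳 × 𝒴 → ℝ) (δ1 : 𝒳 → Xh → ℝ) (δ2 : 𝒴 → Yh → ℝ) (d1 d2 : ℝ) : ℝ :=
  sInf {r : ℝ | 0 ≤ r ∧ RDAchievable q δ1 δ2 d1 d2 r}

/-- `r` is `(d1,d2)`-achievable with common reconstructions. -/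
def CRAchievable (q : 𝒳 × 𝒴 → ℝ) (δ1 : 𝒳 → Xh → ℝ) (δ2 : 𝒴 → Yh → ℝ)
    (d1 d2 r : ℝ) : Prop :=
  ∀ ε > (0 : ℝ), ∃ (n m : ℕ) (f : (Fin n → 𝒳) × (Fin n → 𝒴) → Fin m)
    (g1 : Fin m × (Fin n → 𝒴) → Fin n → Xh)
    (g2 : Fin m × (Fin n → 𝒳) → Fin n → Yh)
    (φ1 : Fin m × (Fin n → 𝒴) → Fin n → Yh)
    (φ2 : Fin m × (Fin n → 𝒳) → Fin n → Xh),
    0 < n ∧ Real.logb 2 m / n ≤ r + ε ∧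
    Delta1 q δ1 f g1 ≤ d1 + ε ∧ Delta2 q δ2 f g2 ≤ d2 + ε ∧
    (∑ xy : (Fin n → 𝒳) × (Fin n → 𝒴),
      if φ2 (f xy, xy.1) = g1 (f xy, xy.2) then 0 else iid q n xy) ≤ ε ∧
    (∑ xy : (Fin n → 𝒳) × (Fin n → 𝒴),
      if φ1 (f xy, xy.2) = g2 (f xy, xy.1) then 0 else iid q n xy) ≤ ε

/-- The common-reconstruction rate-distortion function `R_CR(d1,d2)`. -/
def CRRD (q : 𝒳 × 𝒴 → ℝ) (δ1 : 𝒳 → Xh → ℝ) (δ2 : 𝒴 → Yh → ℝ) (d1 d2 : ℝ) : ℝ :=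
  sInf {r : ℝ | 0 ≤ r ∧ CRAchievable q δ1 δ2 d1 d2 r}

/-- The conditional rate-distortion function `R_{X|Y}(d1)`. -/
def condRD (q : 𝒳 × 𝒴 → ℝ) (δ1 : 𝒳 → Xh → ℝ) (d1 : ℝ) : ℝ :=
  sInf {r : ℝ | ∃ W : 𝒳 × 𝒴 → Xh → ℝ, IsCondPmf W ∧
    (∑ x, ∑ y, ∑ xh, q (x, y) * W (x, y) xh * δ1 x xh) ≤ d1 ∧
    r = condMI (fun t : 𝒳 × 𝒴 × Xh => q (t.1, t.2.1) * W (t.1, t.2.1) t.2.2)}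

/-- Swap the two components of a joint source. -/
def swap (q : 𝒳 × 𝒴 → ℝ) : 𝒴 × 𝒳 → ℝ := fun t => q (t.2, t.1)

/-- The marginal rate-distortion function `R_X(d)`. -/
def margRD (qX : 𝒳 → ℝ) (δ1 : 𝒳 → Xh → ℝ) (d1 : ℝ) : ℝ :=
  sInf {r : ℝ | ∃ W : 𝒳 → Xh → ℝ, IsCondPmf W ∧
    (∑ x, ∑ xh, qX x * W x xh * δ1 x xh) ≤ d1 ∧
    r = MI (fun t : 𝒳 × Xh => qX t.1 * W t.1 t.2)}

def margX (q : 𝒳 × 𝒴 → ℝ) : 𝒳 → ℝ := fun x => ∑ y, q (x, y)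
def margY (q : 𝒳 × 𝒴 → ℝ) : 𝒴 → ℝ := fun y => ∑ x, q (x, y)

/-- The joint rate-distortion function `R_{XY}(d1,d2)`. -/
def jointRD (q : 𝒳 × 𝒴 → ℝ) (δ1 : 𝒳 → Xh → ℝ) (δ2 : 𝒴 → Yh → ℝ) (d1 d2 : ℝ) : ℝ :=
  sInf {r : ℝ | ∃ W : 𝒳 × 𝒴 → Xh × Yh → ℝ, IsCondPmf W ∧
    (∑ xy : 𝒳 × 𝒴, ∑ z : Xh × Yh, q xy * W xy z * δ1 xy.1 z.1) ≤ d1 ∧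
    (∑ xy : 𝒳 × 𝒴, ∑ z : Xh × Yh, q xy * W xy z * δ2 xy.2 z.2) ≤ d2 ∧
    r = MI (fun t : (𝒳 × 𝒴) × (Xh × Yh) => q t.1 * W t.1 t.2)}

/-- The Wyner–Ziv rate-distortion function `R^{WZ}_{X|Y}(d1)`
(with auxiliary alphabet of cardinality `|𝒳| + 1`). -/
def wzRD (q : 𝒳 × 𝒴 → ℝ) (δ1 : 𝒳 → Xh → ℝ) (d1 : ℝ) : ℝ :=
  sInf {r : ℝ | ∃ p : Fin (Fintype.card 𝒳 + 1) × 𝒳 × 𝒴 → ℝ, IsPmf p ∧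
    (∀ x y, (∑ a, p (a, x, y)) = q (x, y)) ∧ Markov p ∧
    (∃ π1 : Fin (Fintype.card 𝒳 + 1) × 𝒴 → Xh,
      (∑ a, ∑ x, ∑ y, p (a, x, y) * δ1 x (π1 (a, y))) ≤ d1) ∧
    r = condMI (fun t : 𝒳 × 𝒴 × Fin (Fintype.card 𝒳 + 1) => p (t.2.2, t.1, t.2.1))}

/-- The set over which the single-letter CR formula
`max{I(X;X̂,Ŷ|Y), I(Y;X̂,Ŷ|X)}` is minimised. -/
def crFormulaSet (q : 𝒳 × 𝒴 → ℝ) (δ1 : 𝒳 → Xh → ℝ) (δ2 : 𝒴 → Yh → ℝ)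
    (d1 d2 : ℝ) : Set ℝ :=
  {r : ℝ | ∃ W : 𝒳 × 𝒴 → Xh × Yh → ℝ, IsCondPmf W ∧
    (∑ x, ∑ y, ∑ z : Xh × Yh, q (x, y) * W (x, y) z * δ1 x z.1) ≤ d1 ∧
    (∑ x, ∑ y, ∑ z : Xh × Yh, q (x, y) * W (x, y) z * δ2 y z.2) ≤ d2 ∧
    r = max
      (condMI (fun t : 𝒳 × 𝒴 × (Xh × Yh) => q (t.1, t.2.1) * W (t.1, t.2.1) t.2.2))
      (condMI (fun t : 𝒴 × 𝒳 × (Xh × Yh) => q (t.2.1, t.1) * W (t.2.1, t.1) t.2.2))}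

/-- Joint law of source blocks and channel outputs for a JSC encoder. -/
def jscP (q : 𝒳 × 𝒴 → ℝ) (qUV : 𝒲 → 𝒰 × 𝒱 → ℝ) {n m : ℕ}
    (f : (Fin n → 𝒳) × (Fin n → 𝒴) → Fin m → 𝒲)
    (x : Fin n → 𝒳) (y : Fin n → 𝒴) (u : Fin m → 𝒰) (v : Fin m → 𝒱) : ℝ :=
  (∏ i, q (x i, y i)) * ∏ j, qUV (f (x, y) j) (u j, v j)

/-- `(d1,d2)` is achievable by joint source-channel coding with source rate `κs`
and channel rate `κc` (bandwidth expansion `κc/κs`). -/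
def JSCAchievable (q : 𝒳 × 𝒴 → ℝ) (qUV : 𝒲 → 𝒰 × 𝒱 → ℝ)
    (δ1 : 𝒳 → Xh → ℝ) (δ2 : 𝒴 → Yh → ℝ) (κs κc d1 d2 : ℝ) : Prop :=
  ∀ ε > (0 : ℝ), ∃ (t n m : ℕ) (f : (Fin n → 𝒳) × (Fin n → 𝒴) → Fin m → 𝒲)
    (g1 : (Fin m → 𝒰) × (Fin n → 𝒴) → Fin n → Xh)
    (g2 : (Fin m → 𝒱) × (Fin n → 𝒳) → Fin n → Yh),
    0 < t ∧ (n : ℝ) = κs * t ∧ (m : ℝ) = κc * t ∧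
    (∑ x : Fin n → 𝒳, ∑ y : Fin n → 𝒴, ∑ u : Fin m → 𝒰, ∑ v : Fin m → 𝒱,
      jscP q qUV f x y u v * ((n : ℝ)⁻¹ * ∑ i, δ1 (x i) (g1 (u, y) i))) ≤ d1 + ε ∧
    (∑ x : Fin n → 𝒳, ∑ y : Fin n → 𝒴, ∑ u : Fin m → 𝒰, ∑ v : Fin m → 𝒱,
      jscP q qUV f x y u v * ((n : ℝ)⁻¹ * ∑ i, δ2 (y i) (g2 (v, x) i))) ≤ d2 + ε

/-- `(d1,d2)` is achievable by joint source-channel coding with common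
reconstructions, source rate `κs` and channel rate `κc`. -/
def CRJSCAchievable (q : 𝒳 × 𝒴 → ℝ) (qUV : 𝒲 → 𝒰 × 𝒱 → ℝ)
    (δ1 : 𝒳 → Xh → ℝ) (δ2 : 𝒴 → Yh → ℝ) (κs κc d1 d2 : ℝ) : Prop :=
  ∀ ε > (0 : ℝ), ∃ (t n m : ℕ) (f : (Fin n → 𝒳) × (Fin n → 𝒴) → Fin m → 𝒲)
    (g1 : (Fin m → 𝒰) × (Fin n → 𝒴) → Fin n → Xh)
    (g2 : (Fin m → 𝒱) × (Fin n → 𝒳) → Fin n → Yh)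
    (φ1 : (Fin m → 𝒰) × (Fin n → 𝒴) → Fin n → Yh)
    (φ2 : (Fin m → 𝒱) × (Fin n → 𝒳) → Fin n → Xh),
    0 < t ∧ (n : ℝ) = κs * t ∧ (m : ℝ) = κc * t ∧
    (∑ x : Fin n → 𝒳, ∑ y : Fin n → 𝒴, ∑ u : Fin m → 𝒰, ∑ v : Fin m → 𝒱,
      jscP q qUV f x y u v * ((n : ℝ)⁻¹ * ∑ i, δ1 (x i) (g1 (u, y) i))) ≤ d1 + ε ∧
    (∑ x : Fin n → 𝒳, ∑ y : Fin n → 𝒴, ∑ u : Fin m → 𝒰, ∑ v : Fin m → 𝒱,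
      jscP q qUV f x y u v * ((n : ℝ)⁻¹ * ∑ i, δ2 (y i) (g2 (v, x) i))) ≤ d2 + ε ∧
    (∑ x : Fin n → 𝒳, ∑ y : Fin n → 𝒴, ∑ u : Fin m → 𝒰, ∑ v : Fin m → 𝒱,
      if φ2 (v, x) = g1 (u, y) then 0 else jscP q qUV f x y u v) ≤ ε ∧
    (∑ x : Fin n → 𝒳, ∑ y : Fin n → 𝒴, ∑ u : Fin m → 𝒰, ∑ v : Fin m → 𝒱,
      if φ1 (u, y) = g2 (v, x) then 0 else jscP q qUV f x y u v) ≤ ε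

/-- `I(W;U)` under the joint law `pW · qUV` (U-marginal of the broadcast channel). -/
def chMIU (qUV : 𝒲 → 𝒰 × 𝒱 → ℝ) (pW : 𝒲 → ℝ) : ℝ :=
  MI (fun t : 𝒲 × 𝒰 => pW t.1 * ∑ v, qUV t.1 (t.2, v))

/-- `I(W;V)` under the joint law `pW · qUV` (V-marginal of the broadcast channel). -/
def chMIV (qUV : 𝒲 → 𝒰 × 𝒱 → ℝ) (pW : 𝒲 → ℝ) : ℝ :=
  MI (fun t : 𝒲 × 𝒱 => pW t.1 * ∑ u, qUV t.1 (u, t.2))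

/-- The doubly symmetric binary source with crossover probability `ρ`. -/
def dsbs (ρ : ℝ) : Bool × Bool → ℝ :=
  fun t => if t.1 = t.2 then (1 - ρ) / 2 else ρ / 2

/-- The Hamming distortion measure. -/
def dHam {α : Type} : α → α → ℝ := fun a b => if a = b then 0 else 1

/-- The binary entropy function (base 2). -/
def binEnt (x : ℝ) : ℝ := -(x * Real.logb 2 x) - (1 - x) * Real.logb 2 (1 - x)

/-- A difference distortion measure built from a per-letter function of the
(modular) difference. -/
def diffD {l : ℕ} (δ : Fin l → ℝ) : Fin l → Fin l → ℝ := fun a b => δ (a - b)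

/-- Capacity of the modulo-additive channel with noise `pN` and input
distortion constraint `d`. -/
def Cadd {l : ℕ} (δ : Fin l → ℝ) (d : ℝ) (pN : Fin l → ℝ) : ℝ :=
  sSup {r : ℝ | ∃ pW : Fin l → ℝ, IsPmf pW ∧ (∑ w, pW w * δ w) ≤ d ∧
    r = MI (fun t : Fin l × Fin l => pW t.1 * pN (t.2 - t.1))}

/-- The minimax (worst-noise) capacity under distortion constraint `d`. -/
def Cworst {l : ℕ} (δ : Fin l → ℝ) (d : ℝ) : ℝ :=
  sInf {r : ℝ | ∃ pN : Fin l → ℝ, IsPmf pN ∧ (∑ x, pN x * δ x) ≤ d ∧ r = Cadd δ d pN}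

/-- Wyner's common information `K(X;Y)` (auxiliary alphabet of size 4). -/
def wynerK (q : 𝒳 × 𝒴 → ℝ) : ℝ :=
  sInf {r : ℝ | ∃ W : 𝒳 × 𝒴 → Fin 4 → ℝ, IsCondPmf W ∧
    Markov (fun t : 𝒳 × Fin 4 × 𝒴 => q (t.1, t.2.2) * W (t.1, t.2.2) t.2.1) ∧
    r = MI (fun t : (𝒳 × 𝒴) × Fin 4 => q t.1 * W t.1 t.2)}

/-- The one-description (Kimura–Uyematsu) upper bound `R_U*(d1,d2)`. -/
def oneDescUB (q : 𝒳 × 𝒴 → ℝ) (δ1 : 𝒳 → Xh → ℝ) (δ2 : 𝒴 → Yh → ℝ) (d1 d2 : ℝ) : ℝ :=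
  sInf {r : ℝ | ∃ W : 𝒳 × 𝒴 → Fin (Fintype.card 𝒳 * Fintype.card 𝒴 + 2) → ℝ,
    IsCondPmf W ∧
    (∃ π1 : Fin (Fintype.card 𝒳 * Fintype.card 𝒴 + 2) × 𝒴 → Xh,
      (∑ x, ∑ y, ∑ c, q (x, y) * W (x, y) c * δ1 x (π1 (c, y))) ≤ d1) ∧
    (∃ π2 : Fin (Fintype.card 𝒳 * Fintype.card 𝒴 + 2) × 𝒳 → Yh,
      (∑ x, ∑ y, ∑ c, q (x, y) * W (x, y) c * δ2 y (π2 (c, x))) ≤ d2) ∧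
    r = max
      (condMI (fun t : 𝒳 × 𝒴 × Fin (Fintype.card 𝒳 * Fintype.card 𝒴 + 2) =>
        q (t.1, t.2.1) * W (t.1, t.2.1) t.2.2))
      (condMI (fun t : 𝒴 × 𝒳 × Fin (Fintype.card 𝒳 * Fintype.card 𝒴 + 2) =>
        q (t.2.1, t.1) * W (t.2.1, t.1) t.2.2))}

end TWR

namespace TWRAux
open TWR

lemma sum_prod_pow {α : Type} [Fintype α] (g : α → ℝ) (n : ℕ) :
    ∑ a : Fin n → α, ∏ i, g (a i) = (∑ a, g a) ^ n := by
  rw [Fintype.sum_pow]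

lemma sum_prod_gen {V K : Type} [Fintype V] [DecidableEq V] [Fintype K] (g : V → K → ℝ) :
    ∑ F : V → K, ∏ v, g v (F v) = ∏ v, ∑ k, g v k := by
  rw [Finset.prod_univ_sum]
  simp

/-- Marginalization. -/
lemma sum_prod_marg {α : Type} [Fintype α] (p : α → ℝ) (hp : ∑ a, p a = 1) (z : α → ℝ)
    (n : ℕ) (j : Fin n) :
    ∑ a : Fin n → α, (∏ i, p (a i)) * z (a j) = ∑ a, p a * z a := by
  have h := sum_prod_gen (fun (i : Fin n) (a : α) => p a * (if i = j then z a else 1))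
  have h1 : ∀ a : Fin n → α, (∏ i, p (a i) * (if i = j then z (a i) else 1))
      = (∏ i, p (a i)) * z (a j) := by
    intro a
    rw [Finset.prod_mul_distrib, Finset.prod_ite_eq' Finset.univ j (fun i => z (a i))]
    simp
  simp only [h1] at h
  rw [h, Finset.prod_eq_single j]
  · simp
  · intro b _ hb
    simp [hb, hp]
  · simp

def pairE (n : ℕ) (α β : Type) : (Fin n → α × β) ≃ (Fin n → α) × (Fin n → β) :=
  Equiv.arrowProdEquivProdArrow (Fin n) (fun _ => α) (fun _ => β)

lemma sum_pairE {n : ℕ} {α β : Type} [Fintype α] [Fintype β]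
    (F : (Fin n → α) × (Fin n → β) → ℝ) :
    ∑ s, F s = ∑ a : Fin n → α × β, F (fun i => (a i).1, fun i => (a i).2) := by
  rw [← Equiv.sum_comp (pairE n α β)]
  rfl

section source
variable {ρ : ℝ}

lemma dsbs_sum (ρ : ℝ) (z : Bool × Bool → ℝ) :
    ∑ a, dsbs ρ a * z a = (1 - ρ) / 2 * (z (true, true) + z (false, false))
      + ρ / 2 * (z (true, false) + z (false, true)) := by
  simp only [Fintype.sum_prod_type, Fintype.sum_bool, dsbs]
  simp
  ring

lemma dsbs_sum_one (ρ : ℝ) : ∑ a, dsbs ρ a = 1 := by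
  have := dsbs_sum ρ (fun _ => 1)
  simp only [mul_one] at this
  rw [this]; ring

lemma dsbs_pos (h0 : 0 < ρ) (h1 : ρ < 1) (a : Bool × Bool) : 0 < dsbs ρ a := by
  unfold dsbs; split_ifs <;> linarith

lemma dsbs_nonneg (h0 : 0 ≤ ρ) (h1 : ρ ≤ 1) (a : Bool × Bool) : 0 ≤ dsbs ρ a := by
  unfold dsbs; split_ifs <;> linarith

lemma iid_sum_one (ρ : ℝ) (n : ℕ) : ∑ s, iid (dsbs ρ) n s = 1 := by
  rw [sum_pairE]
  simp only [iid]
  rw [sum_prod_pow, dsbs_sum_one, one_pow]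

lemma iid_nonneg (h0 : 0 ≤ ρ) (h1 : ρ ≤ 1) (n : ℕ) (s) : 0 ≤ iid (dsbs ρ) n s :=
  Finset.prod_nonneg (fun _ _ => dsbs_nonneg h0 h1 _)

lemma iid_pos (h0 : 0 < ρ) (h1 : ρ < 1) (n : ℕ) (s) : 0 < iid (dsbs ρ) n s :=
  Finset.prod_pos (fun _ _ => dsbs_pos h0 h1 _)

lemma iid_swap (ρ : ℝ) (n : ℕ) (s) : iid (dsbs ρ) n s.swap = iid (dsbs ρ) n s := by
  unfold iid dsbs
  refine Finset.prod_congr rfl fun i _ => ?_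
  simp [eq_comm]

lemma iid_sum_single (ρ : ℝ) (n : ℕ) (z : Bool × Bool → ℝ) :
    ∑ s, iid (dsbs ρ) n s * ∑ i, z (s.1 i, s.2 i) = n * ∑ a, dsbs ρ a * z a := by
  rw [sum_pairE]
  simp only [iid, Finset.mul_sum]
  rw [Finset.sum_comm]
  have : ∀ j : Fin n, ∑ a : Fin n → Bool × Bool, (∏ i, dsbs ρ (a i)) * z (a j)
      = ∑ a, dsbs ρ a * z a := sum_prod_marg _ (dsbs_sum_one ρ) z n
  simp only [Prod.mk.eta, this]
  simp [Finset.mul_sum]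

lemma binEnt_mul (x : ℝ) : Real.log 2 * binEnt x = -(x * Real.log x) - (1 - x) * Real.log (1 - x) := by
  have : Real.log 2 ≠ 0 := (Real.log_pos one_lt_two).ne'
  unfold binEnt Real.logb
  field_simp

/-- change-of-measure converse. -/
lemma conv1 (h0 : 0 < ρ) (h1 : ρ < 1) {n m : ℕ}
    (f : (Fin n → Bool) × (Fin n → Bool) → Fin m)
    (K : Fin m → (Fin n → Bool) → (Fin n → Bool) → ℝ) (hK : ∀ k y x, 0 < K k y x)
    (hK1 : ∀ k y, ∑ x, K k y x = 1) :
    ∑ s, iid (dsbs ρ) n s * Real.log (K (f s) s.2 s.1) + n * (Real.log 2 * binEnt ρ)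
      ≤ Real.log m := by
  have hm : 0 < m := (f (fun _ => true, fun _ => true)).pos
  have hm' : (0 : ℝ) < m := by exact_mod_cast hm
  have hlog : ∑ s : (Fin n → Bool) × (Fin n → Bool), iid (dsbs ρ) n s * (n * Real.log 2 + Real.log (iid (dsbs ρ) n s))
      = - (n * (Real.log 2 * binEnt ρ)) := by
    have e : ∀ s : (Fin n → Bool) × (Fin n → Bool), iid (dsbs ρ) n s * (n * Real.log 2 + Real.log (iid (dsbs ρ) n s))
      = iid (dsbs ρ) n s * ∑ i, (fun a => Real.log 2 + Real.log (dsbs ρ a)) (s.1 i, s.2 i) := by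
      intro s
      congr 1
      rw [iid, Real.log_prod (fun i _ => (dsbs_pos h0 h1 _).ne')]
      simp [Finset.sum_add_distrib]
    simp only [e]
    rw [iid_sum_single ρ n (fun a => Real.log 2 + Real.log (dsbs ρ a)), dsbs_sum, binEnt_mul]
    simp only [dsbs]
    simp
    rw [Real.log_div (by linarith) (by norm_num), Real.log_div (by linarith) (by norm_num)]
    ring
  have key : ∀ s : (Fin n → Bool) × (Fin n → Bool), iid (dsbs ρ) n s *
      (Real.log (K (f s) s.2 s.1) - (n * Real.log 2 + Real.log (iid (dsbs ρ) n s)) - Real.log m)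
      ≤ K (f s) s.2 s.1 / (2 ^ n * m) - iid (dsbs ρ) n s := by
    intro s
    have hp := iid_pos h0 h1 n s
    have hk := hK (f s) s.2 s.1
    have h2 : (0:ℝ) < 2 ^ n := by positivity
    have e : Real.log (K (f s) s.2 s.1) - (n * Real.log 2 + Real.log (iid (dsbs ρ) n s)) - Real.log m
        = Real.log (K (f s) s.2 s.1 / (2 ^ n * iid (dsbs ρ) n s * m)) := by
      rw [Real.log_div hk.ne' (by positivity), Real.log_mul (by positivity) hm'.ne',
        Real.log_mul h2.ne' hp.ne', Real.log_pow]
      ring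
    rw [e]
    have := Real.log_le_sub_one_of_pos (x := K (f s) s.2 s.1 / (2 ^ n * iid (dsbs ρ) n s * m))
      (by positivity)
    calc _ ≤ iid (dsbs ρ) n s * (K (f s) s.2 s.1 / (2 ^ n * iid (dsbs ρ) n s * m) - 1) :=
          mul_le_mul_of_nonneg_left this hp.le
      _ = _ := by field_simp
  have hs := Finset.sum_le_sum (fun s (_ : s ∈ Finset.univ) => key s)
  have hKsum : ∑ s : (Fin n → Bool) × (Fin n → Bool), K (f s) s.2 s.1 ≤ 2 ^ n * m := by
    calc ∑ s : (Fin n → Bool) × (Fin n → Bool), K (f s) s.2 s.1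
        ≤ ∑ s : (Fin n → Bool) × (Fin n → Bool), ∑ k, K k s.2 s.1 :=
          Finset.sum_le_sum fun s _ =>
            Finset.single_le_sum (f := fun k => K k s.2 s.1) (fun k _ => (hK _ _ _).le) (Finset.mem_univ _)
      _ = ∑ k, ∑ y, ∑ x, K k y x := by
          rw [Finset.sum_comm]
          refine Finset.sum_congr rfl fun k _ => ?_
          rw [Fintype.sum_prod_type_right]
      _ = 2 ^ n * m := by simp [hK1]; ring
  rw [Finset.sum_sub_distrib, ← Finset.sum_div, iid_sum_one] at hs
  have : (∑ s : (Fin n → Bool) × (Fin n → Bool), K (f s) s.2 s.1) / (2 ^ n * m) ≤ 1 := by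
    rw [div_le_one (by positivity)]; exact hKsum
  have e2 : ∑ s : (Fin n → Bool) × (Fin n → Bool), iid (dsbs ρ) n s *
      (Real.log (K (f s) s.2 s.1) - (n * Real.log 2 + Real.log (iid (dsbs ρ) n s)) - Real.log m)
      = ∑ s, iid (dsbs ρ) n s * Real.log (K (f s) s.2 s.1) + n * (Real.log 2 * binEnt ρ) - Real.log m := by
    simp only [mul_sub, Finset.sum_sub_distrib]
    rw [hlog, ← Finset.sum_mul, iid_sum_one]; ring
  rw [e2] at hs
  linarith

/-- sign of agreement -/
def sg (a b : Bool) : ℝ := if a = b then 1 else -1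

/-- BSC kernel -/
def bsc (d : ℝ) (a b : Bool) : ℝ := if a = b then 1 - d else d

lemma bsc_pos {d : ℝ} (h0 : 0 < d) (h1 : d < 1) (a b) : 0 < bsc d a b := by
  unfold bsc; split_ifs <;> linarith

lemma log_bsc (d : ℝ) (a b) : Real.log (bsc d a b) =
    Real.log (1 - d) - dHam a b * (Real.log (1 - d) - Real.log d) := by
  unfold bsc dHam; split_ifs <;> simp_all

lemma abs_sg_sub {d : ℝ} (h0 : 0 < d) (h1 : d < 1) (a b) : |sg a b - (1 - 2 * d)| ≤ 2 := by
  unfold sg; split_ifs <;> rw [abs_le] <;> constructor <;> linarith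

lemma log_one_add_ge {t : ℝ} (h : |t| ≤ 1 / 2) : t - 2 * t ^ 2 ≤ Real.log (1 + t) := by
  rw [abs_le] at h
  have hp : 0 < 1 + t := by linarith
  have := Real.one_sub_inv_le_log_of_pos hp
  have h2 : t - 2 * t ^ 2 ≤ 1 - (1 + t)⁻¹ + 0 := by
    rw [show (1 : ℝ) - (1 + t)⁻¹ = t / (1 + t) by field_simp; ring, add_zero, le_div_iff₀ hp]
    nlinarith [sq_nonneg t, mul_nonneg (sq_nonneg t) hp.le, mul_nonneg (sq_nonneg t) (by linarith : 0 ≤ t + 1/2)]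
  linarith

lemma sum_lin {ι : Type} [Fintype ι] (P D E : ι → ℝ) (hP : ∑ s, P s = 1) (c1 l θ c2 : ℝ) :
    ∑ s, P s * ((c1 - D s * l) + θ * E s - c2)
      = c1 - l * (∑ s, P s * D s) + θ * (∑ s, P s * E s) - c2 := by
  have : ∀ s, P s * ((c1 - D s * l) + θ * E s - c2)
      = c1 * P s - l * (P s * D s) + θ * (P s * E s) - c2 * P s := fun s => by ring
  simp only [this, Finset.sum_sub_distrib, Finset.sum_add_distrib, ← Finset.mul_sum, hP]
  ring

lemma conv2 (h0 : 0 < ρ) (h1 : ρ < 1) {d : ℝ} (hd0 : 0 < d) (hd1 : d < 1) {n m : ℕ}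
    (f : (Fin n → Bool) × (Fin n → Bool) → Fin m)
    (g : Fin m × (Fin n → Bool) → Fin n → Bool)
    (u : Fin m × (Fin n → Bool) → Fin n → ℝ) (hu : ∀ k i, |u k i| ≤ 1)
    {θ : ℝ} (hθ0 : 0 ≤ θ) (hθ1 : θ ≤ 1 / 4) :
    n * (Real.log 2 * binEnt ρ)
     + n * Real.log (1 - d)
     - (Real.log (1 - d) - Real.log d) * (∑ s, iid (dsbs ρ) n s * ∑ i, dHam (s.1 i) (g (f s, s.2) i))
     + θ * (∑ s, iid (dsbs ρ) n s * ∑ i, (sg (s.1 i) (g (f s, s.2) i) - (1 - 2 * d)) * u (f s, s.2) i)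
     - n * (8 * θ ^ 2) ≤ Real.log m := by
  have hb : ∀ (a b : Bool) k i, |θ * ((sg a b - (1 - 2 * d)) * u k i)| ≤ 2 * θ := by
    intro a b k i
    rw [abs_mul, abs_mul, abs_of_nonneg hθ0]
    have := mul_le_mul (abs_sg_sub hd0 hd1 a b) (hu k i) (abs_nonneg _) (by norm_num)
    nlinarith
  have hpos : ∀ (a b : Bool) k i, 0 < 1 + θ * ((sg a b - (1 - 2 * d)) * u k i) := by
    intro a b k i
    have := (abs_le.1 (hb a b k i)).1
    linarith
  have hc := conv1 h0 h1 f
    (fun k y x => ∏ i, (bsc d (x i) (g (k, y) i)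
      * (1 + θ * ((sg (x i) (g (k, y) i) - (1 - 2 * d)) * u (k, y) i))))
    (fun k y x => Finset.prod_pos fun i _ => mul_pos (bsc_pos hd0 hd1 _ _) (hpos _ _ _ _))
    (by
      intro k y
      rw [sum_prod_gen (fun i (a : Bool) => bsc d a (g (k, y) i)
        * (1 + θ * ((sg a (g (k, y) i) - (1 - 2 * d)) * u (k, y) i)))]
      refine Finset.prod_eq_one fun i _ => ?_
      rw [Fintype.sum_bool]
      cases g (k, y) i <;> simp [bsc, sg] <;> ring)
  have hl : ∀ s : (Fin n → Bool) × (Fin n → Bool),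
      iid (dsbs ρ) n s * ((n * Real.log (1 - d) - (∑ i, dHam (s.1 i) (g (f s, s.2) i)) * (Real.log (1 - d) - Real.log d))
        + θ * (∑ i, (sg (s.1 i) (g (f s, s.2) i) - (1 - 2 * d)) * u (f s, s.2) i) - n * (8 * θ ^ 2))
      ≤ iid (dsbs ρ) n s * Real.log (∏ i, (bsc d (s.1 i) (g (f s, s.2) i)
      * (1 + θ * ((sg (s.1 i) (g (f s, s.2) i) - (1 - 2 * d)) * u (f s, s.2) i)))) := by
    intro s
    refine mul_le_mul_of_nonneg_left ?_ (iid_pos h0 h1 n s).le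
    rw [Real.log_prod (fun i _ => (mul_pos (bsc_pos hd0 hd1 _ _) (hpos _ _ _ _)).ne')]
    have : ∀ i ∈ (Finset.univ : Finset (Fin n)), (Real.log (1 - d) - dHam (s.1 i) (g (f s, s.2) i) * (Real.log (1 - d) - Real.log d))
        + θ * ((sg (s.1 i) (g (f s, s.2) i) - (1 - 2 * d)) * u (f s, s.2) i) - 8 * θ ^ 2
        ≤ Real.log (bsc d (s.1 i) (g (f s, s.2) i)
      * (1 + θ * ((sg (s.1 i) (g (f s, s.2) i) - (1 - 2 * d)) * u (f s, s.2) i))) := by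
      intro i _
      rw [Real.log_mul (bsc_pos hd0 hd1 _ _).ne' (hpos _ _ _ _).ne', log_bsc]
      have hb' := hb (s.1 i) (g (f s, s.2) i) (f s, s.2) i
      have h3 := log_one_add_ge (hb'.trans (by linarith))
      have h4 := sq_le_sq' (by linarith [(abs_le.1 hb').1]) (abs_le.1 hb').2
      nlinarith
    have h5 := Finset.sum_le_sum this
    simp only [Finset.sum_sub_distrib, Finset.sum_add_distrib, ← Finset.mul_sum, ← Finset.sum_mul] at h5
    simp only [Finset.sum_const, Finset.card_univ, Fintype.card_fin, nsmul_eq_mul] at h5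
    linarith
  have h6 := Finset.sum_le_sum (fun s (_ : s ∈ Finset.univ) => hl s)
  have e : ∑ s : (Fin n → Bool) × (Fin n → Bool),
      iid (dsbs ρ) n s * ((n * Real.log (1 - d) - (∑ i, dHam (s.1 i) (g (f s, s.2) i)) * (Real.log (1 - d) - Real.log d))
        + θ * (∑ i, (sg (s.1 i) (g (f s, s.2) i) - (1 - 2 * d)) * u (f s, s.2) i) - n * (8 * θ ^ 2))
      = n * Real.log (1 - d)
     - (Real.log (1 - d) - Real.log d) * (∑ s, iid (dsbs ρ) n s * ∑ i, dHam (s.1 i) (g (f s, s.2) i))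
     + θ * (∑ s, iid (dsbs ρ) n s * ∑ i, (sg (s.1 i) (g (f s, s.2) i) - (1 - 2 * d)) * u (f s, s.2) i)
     - n * (8 * θ ^ 2) := by
    exact sum_lin _ _ _ (iid_sum_one ρ n) _ _ _ _
  rw [e] at h6
  linarith

end source

section converse
variable {ρ d : ℝ}

lemma sum_swap {n : ℕ} (ρ : ℝ) (F : (Fin n → Bool) × (Fin n → Bool) → ℝ) :
    ∑ s, iid (dsbs ρ) n s * F s.swap = ∑ s, iid (dsbs ρ) n s * F s := by
  rw [← Equiv.sum_comp (Equiv.prodComm _ _)]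
  refine Finset.sum_congr rfl fun s _ => ?_
  simp only [Equiv.prodComm_apply, Prod.swap_swap]
  rw [iid_swap]

lemma sg_abs (a b : Bool) : |sg a b| ≤ 1 := by
  unfold sg; split_ifs <;> simp

lemma good_ineq (x y a b : Bool) :
    sg x y - (1 - 2 * d) ^ 2 ≤ (sg x a - (1 - 2 * d)) * (sg y b * sg a b)
      + (1 - 2 * d) * ((sg y b - (1 - 2 * d)) * sg a b) := by
  cases x <;> cases y <;> cases a <;> cases b <;> simp [sg] <;> nlinarith [sq_nonneg (1 - 2 * d)]

lemma bad_ineq (hd0 : 0 < d) (hd1 : d ≤ 1 / 2) (x y a b a' b' : Bool) :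
    sg x y - (1 - 2 * d) ^ 2 - 6 ≤ (sg x a - (1 - 2 * d)) * (sg y b * sg a b)
      + (1 - 2 * d) * ((sg y b' - (1 - 2 * d)) * sg a' b') := by
  have h0 : sg x y ≤ 1 := (abs_le.1 (sg_abs x y)).2
  have h1 : -2 ≤ (sg x a - (1 - 2 * d)) * (sg y b * sg a b) := by
    unfold sg; split_ifs <;> linarith
  have h2 : -2 ≤ (sg y b' - (1 - 2 * d)) * sg a' b' := by
    unfold sg; split_ifs <;> linarith
  nlinarith [sq_nonneg (1 - 2 * d)]

lemma converse_code (h0 : 0 < ρ) (h1 : ρ < 1) (hd0 : 0 < d) (hd1 : d ≤ 1 / 2)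
    {θ : ℝ} (hθ0 : 0 ≤ θ) (hθ1 : θ ≤ 1 / 4) {r ε : ℝ}
    {n m : ℕ} (f : (Fin n → Bool) × (Fin n → Bool) → Fin m)
    (g1 g2 φ1 φ2 : Fin m × (Fin n → Bool) → Fin n → Bool) (hn : 0 < n)
    (hr : Real.logb 2 m / n ≤ r + ε)
    (hD1 : Delta1 (dsbs ρ) dHam f g1 ≤ d + ε) (hD2 : Delta2 (dsbs ρ) dHam f g2 ≤ d + ε)
    (he1 : (∑ xy : (Fin n → Bool) × (Fin n → Bool),
      if φ2 (f xy, xy.1) = g1 (f xy, xy.2) then 0 else iid (dsbs ρ) n xy) ≤ ε)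
    (he2 : (∑ xy : (Fin n → Bool) × (Fin n → Bool),
      if φ1 (f xy, xy.2) = g2 (f xy, xy.1) then 0 else iid (dsbs ρ) n xy) ≤ ε) :
    (1 + (1 - 2 * d)) * (Real.log 2 * (binEnt ρ - binEnt d))
      + θ * (1 - 2 * ρ - (1 - 2 * d) ^ 2) - (1 + (1 - 2 * d)) * (8 * θ ^ 2)
     ≤ (1 + (1 - 2 * d)) * (Real.log 2 * r) + ε * ((1 + (1 - 2 * d)) * (Real.log (1 - d) - Real.log d)
        + 12 * θ + (1 + (1 - 2 * d)) * Real.log 2) := by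
  have hn' : (0 : ℝ) < n := by exact_mod_cast hn
  have c1 := conv2 h0 h1 hd0 (by linarith) f g1
    (fun k i => sg (k.2 i) (φ1 k i) * sg (g1 k i) (φ1 k i))
    (fun k i => by
      rw [abs_mul]
      exact mul_le_one₀ (sg_abs _ _) (abs_nonneg _) (sg_abs _ _)) hθ0 hθ1
  have c2 := conv2 h0 h1 hd0 (by linarith) (fun s => f s.swap) g2
    (fun k i => sg (φ2 k i) (g2 k i)) (fun k i => sg_abs _ _) hθ0 hθ1
  have e1 := sum_swap ρ (fun s => ∑ i, dHam (s.2 i) (g2 (f s, s.1) i))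
  have e2 := sum_swap ρ (fun s => ∑ i, (sg (s.2 i) (g2 (f s, s.1) i) - (1 - 2 * d)) *
      sg (φ2 (f s, s.1) i) (g2 (f s, s.1) i))
  simp only [Prod.fst_swap, Prod.snd_swap] at e1 e2
  rw [e1, e2] at c2
  have f1 : ∑ s, iid (dsbs ρ) n s * ∑ i, dHam (s.1 i) (g1 (f s, s.2) i)
      = n * Delta1 (dsbs ρ) dHam f g1 := by
    unfold Delta1
    rw [Finset.mul_sum]
    refine Finset.sum_congr rfl fun s _ => ?_
    field_simp
  have f2 : ∑ s, iid (dsbs ρ) n s * ∑ i, dHam (s.2 i) (g2 (f s, s.1) i)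
      = n * Delta2 (dsbs ρ) dHam f g2 := by
    unfold Delta2
    rw [Finset.mul_sum]
    refine Finset.sum_congr rfl fun s _ => ?_
    field_simp
  rw [f1] at c1
  rw [f2] at c2
  set S1 := ∑ s, iid (dsbs ρ) n s * ∑ i, (sg (s.1 i) (g1 (f s, s.2) i) - (1 - 2 * d)) *
      (sg (s.2 i) (φ1 (f s, s.2) i) * sg (g1 (f s, s.2) i) (φ1 (f s, s.2) i)) with hS1
  set S2 := ∑ s, iid (dsbs ρ) n s * ∑ i, (sg (s.2 i) (g2 (f s, s.1) i) - (1 - 2 * d)) *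
      sg (φ2 (f s, s.1) i) (g2 (f s, s.1) i) with hS2
  have hS : n * (1 - 2 * ρ - (1 - 2 * d) ^ 2) - 6 * n * (2 * ε) ≤ S1 + (1 - 2 * d) * S2 := by
    have k1 : ∑ s, iid (dsbs ρ) n s * ∑ i, (fun a : Bool × Bool => sg a.1 a.2 - (1 - 2 * d) ^ 2) (s.1 i, s.2 i)
        = n * (1 - 2 * ρ - (1 - 2 * d) ^ 2) := by
      rw [iid_sum_single ρ n (fun a : Bool × Bool => sg a.1 a.2 - (1 - 2 * d) ^ 2), dsbs_sum]
      simp [sg]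
      left
      ring
    have k2 : ∀ s ∈ (Finset.univ : Finset ((Fin n → Bool) × (Fin n → Bool))),
        iid (dsbs ρ) n s * ∑ i, (fun a : Bool × Bool => sg a.1 a.2 - (1 - 2 * d) ^ 2) (s.1 i, s.2 i)
        - 6 * n * ((if φ2 (f s, s.1) = g1 (f s, s.2) then 0 else iid (dsbs ρ) n s)
          + (if φ1 (f s, s.2) = g2 (f s, s.1) then 0 else iid (dsbs ρ) n s))
        ≤ iid (dsbs ρ) n s * (∑ i, (sg (s.1 i) (g1 (f s, s.2) i) - (1 - 2 * d)) *
      (sg (s.2 i) (φ1 (f s, s.2) i) * sg (g1 (f s, s.2) i) (φ1 (f s, s.2) i)))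
          + (1 - 2 * d) * (iid (dsbs ρ) n s * ∑ i, (sg (s.2 i) (g2 (f s, s.1) i) - (1 - 2 * d)) *
      sg (φ2 (f s, s.1) i) (g2 (f s, s.1) i)) := by
      intro s _
      have hP := (iid_pos h0 h1 n s).le
      by_cases hg : φ2 (f s, s.1) = g1 (f s, s.2) ∧ φ1 (f s, s.2) = g2 (f s, s.1)
      · rw [if_pos hg.1, if_pos hg.2, hg.1, hg.2]
        have := Finset.sum_le_sum (fun i (_ : i ∈ Finset.univ) =>
          good_ineq (d := d) (s.1 i) (s.2 i) (g1 (f s, s.2) i) (g2 (f s, s.1) i))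
        rw [Finset.sum_add_distrib, ← Finset.mul_sum] at this
        have := mul_le_mul_of_nonneg_left this hP
        simp only
        linarith
      · have := Finset.sum_le_sum (fun i (_ : i ∈ Finset.univ) =>
          bad_ineq hd0 hd1 (s.1 i) (s.2 i) (g1 (f s, s.2) i) (φ1 (f s, s.2) i)
            (φ2 (f s, s.1) i) (g2 (f s, s.1) i))
        rw [Finset.sum_add_distrib, ← Finset.mul_sum, Finset.sum_sub_distrib] at this
        simp only [Finset.sum_const, Finset.card_univ, Fintype.card_fin, nsmul_eq_mul] at this
        have := mul_le_mul_of_nonneg_left this hP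
        have h7 : iid (dsbs ρ) n s ≤ (if φ2 (f s, s.1) = g1 (f s, s.2) then 0 else iid (dsbs ρ) n s)
          + (if φ1 (f s, s.2) = g2 (f s, s.1) then 0 else iid (dsbs ρ) n s) := by
          split_ifs with ha hb
          · exact absurd ⟨ha, hb⟩ hg
          all_goals linarith
        have := mul_le_mul_of_nonneg_left h7 hn'.le
        simp only
        linarith
    have k3 := Finset.sum_le_sum k2
    rw [Finset.sum_sub_distrib, k1, Finset.sum_add_distrib, ← Finset.mul_sum, ← Finset.mul_sum,
      Finset.sum_add_distrib] at k3
    nlinarith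
  have hμ : 0 ≤ 1 - 2 * d := by linarith
  have hΛ : 0 ≤ Real.log (1 - d) - Real.log d := by
    have := Real.log_le_log hd0 (by linarith : d ≤ 1 - d)
    linarith
  have hl2 : 0 < Real.log 2 := Real.log_pos one_lt_two
  have hm : Real.log m ≤ n * (Real.log 2 * (r + ε)) := by
    rw [div_le_iff₀ hn', Real.logb, div_le_iff₀ hl2] at hr
    linarith
  have hb := binEnt_mul d
  have a1 := mul_le_mul_of_nonneg_left hD1 (mul_nonneg hn'.le hΛ)
  have a2 := mul_le_mul_of_nonneg_left hD2 (mul_nonneg hn'.le hΛ)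
  have c1' := c1.trans hm
  have c2' := mul_le_mul_of_nonneg_left (c2.trans hm) hμ
  have a2' := mul_le_mul_of_nonneg_left a2 hμ
  have hS' := mul_le_mul_of_nonneg_left hS hθ0
  rw [mul_sub (Real.log 2), hb]
  refine le_of_mul_le_mul_left ?_ hn'
  linarith

lemma converse (h0 : 0 < ρ) (h1 : ρ < 1) (hd0 : 0 < d) (hd1 : d ≤ 1 / 2)
    (hγ : 0 < 1 - 2 * ρ - (1 - 2 * d) ^ 2) :
    ∃ c > 0, ∀ r, CRAchievable (dsbs ρ) (dHam (α := Bool)) (dHam (α := Bool)) d d r →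
      binEnt ρ - binEnt d + c ≤ r := by
  set γ := 1 - 2 * ρ - (1 - 2 * d) ^ 2 with hγd
  have hl2 : 0 < Real.log 2 := Real.log_pos one_lt_two
  refine ⟨γ ^ 2 / (128 * Real.log 2), by positivity, fun r hr => ?_⟩
  have hγ1 : γ ≤ 1 := by nlinarith [sq_nonneg (1 - 2 * d)]
  have hΛ : 0 ≤ Real.log (1 - d) - Real.log d := by
    have := Real.log_le_log hd0 (by linarith : d ≤ 1 - d)
    linarith
  have hμ : 0 ≤ 1 - 2 * d := by linarith
  set c := ((1 + (1 - 2 * d)) * (Real.log (1 - d) - Real.log d)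
        + 12 * (γ / 32) + (1 + (1 - 2 * d)) * Real.log 2) with hc
  have hc0 : 0 < c := by positivity
  have key : (1 + (1 - 2 * d)) * (Real.log 2 * (binEnt ρ - binEnt d))
      + γ / 32 * γ - (1 + (1 - 2 * d)) * (8 * (γ / 32) ^ 2) ≤ (1 + (1 - 2 * d)) * (Real.log 2 * r) := by
    refine le_of_forall_pos_le_add fun ε hε => ?_
    obtain ⟨n, m, f, g1, g2, φ1, φ2, hn, hr1, hD1, hD2, he1, he2⟩ := hr (ε / c) (by positivity)
    have := converse_code h0 h1 hd0 hd1 (θ := γ / 32) (by positivity) (by linarith) f g1 g2 φ1 φ2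
      hn hr1 hD1 hD2 (by convert he1) (by convert he2)
    rw [← hγd, ← hc, div_mul_cancel₀ _ hc0.ne'] at this
    exact this
  have e : γ ^ 2 / (128 * Real.log 2) = (γ ^ 2 / 128) / Real.log 2 := by field_simp
  have h3 : Real.log 2 * (binEnt ρ - binEnt d + γ ^ 2 / (128 * Real.log 2)) ≤ Real.log 2 * r := by
    rw [mul_add, e, mul_div_cancel₀ _ hl2.ne']
    have hp : 0 < 1 + (1 - 2 * d) := by linarith
    refine le_of_mul_le_mul_left ?_ hp
    nlinarith [mul_nonneg (sq_nonneg γ) hd0.le]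
  exact le_of_mul_le_mul_left h3 hl2

end converse

section achiev

/-- Chernoff-type weak law. -/
lemma wlln {α : Type} [Fintype α] (p : α → ℝ) (hp : ∀ a, 0 ≤ p a) (hp1 : ∑ a, p a = 1)
    (z : α → ℝ) (hz : ∑ a, p a * z a ≤ 0) {η : ℝ} (hη : 0 < η) :
    ∃ c, 0 ≤ c ∧ c < 1 ∧ ∀ n : ℕ,
      ∑ a : Fin n → α, (if n * η < ∑ i, z (a i) then ∏ i, p (a i) else 0) ≤ c ^ n := by
  set B := 1 + η + ∑ a, |z a| with hB
  have hs : 0 ≤ ∑ a, |z a| := Finset.sum_nonneg fun _ _ => abs_nonneg _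
  have hB1 : 1 ≤ B := by linarith
  have hBη : η ≤ B := by linarith
  have hBz : ∀ a, |z a| ≤ B := fun a => by
    have := Finset.single_le_sum (f := fun a => |z a|) (fun _ _ => abs_nonneg _) (Finset.mem_univ a)
    linarith
  have hB0 : 0 < B := by linarith
  set t := η / (2 * B ^ 2) with ht
  have ht0 : 0 < t := by positivity
  have htB : t * B ≤ 1 := by
    rw [ht, div_mul_eq_mul_div, div_le_one (by positivity)]
    nlinarith
  have hexp : ∑ a, p a * Real.exp (t * z a) ≤ Real.exp (t ^ 2 * B ^ 2) := by
    have h1 : ∀ a ∈ Finset.univ, p a * Real.exp (t * z a) ≤ p a * (1 + t ^ 2 * B ^ 2) + t * (p a * z a) := by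
      intro a _
      have h2 : |t * z a| ≤ t * B := by
        rw [abs_mul, abs_of_pos ht0]; exact mul_le_mul_of_nonneg_left (hBz a) ht0.le
      have h3 := (abs_le.1 (Real.abs_exp_sub_one_sub_id_le (h2.trans htB))).2
      have h4 := sq_le_sq' (by linarith [(abs_le.1 h2).1]) (abs_le.1 h2).2
      have : Real.exp (t * z a) ≤ (1 + t ^ 2 * B ^ 2) + t * z a := by nlinarith
      nlinarith [mul_le_mul_of_nonneg_left this (hp a)]
    have h5 := Finset.sum_le_sum h1
    rw [Finset.sum_add_distrib, ← Finset.sum_mul, ← Finset.mul_sum, hp1] at h5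
    have := Real.add_one_le_exp (t ^ 2 * B ^ 2)
    nlinarith
  refine ⟨Real.exp (-(t * η)) * ∑ a, p a * Real.exp (t * z a),
    mul_nonneg (Real.exp_pos _).le (Finset.sum_nonneg fun a _ => mul_nonneg (hp a) (Real.exp_pos _).le), ?_, ?_⟩
  · calc _ ≤ Real.exp (-(t * η)) * Real.exp (t ^ 2 * B ^ 2) :=
          mul_le_mul_of_nonneg_left hexp (Real.exp_pos _).le
      _ = Real.exp (-(t * η) + t ^ 2 * B ^ 2) := by rw [Real.exp_add]
      _ < 1 := by
        rw [Real.exp_lt_one_iff]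
        have : t * B ^ 2 = η / 2 := by rw [ht]; field_simp
        have : t ^ 2 * B ^ 2 = t * (η / 2) := by rw [← this]; ring
        rw [this]; nlinarith [mul_pos ht0 hη]
  · intro n
    rw [mul_pow, ← sum_prod_pow, Finset.mul_sum]
    refine Finset.sum_le_sum fun a _ => ?_
    have hP : 0 ≤ ∏ i, p (a i) := Finset.prod_nonneg fun i _ => hp _
    rw [Finset.prod_mul_distrib, ← Real.exp_sum, ← Finset.mul_sum, ← Real.exp_nat_mul]
    have e : Real.exp (n * -(t * η)) * ((∏ i, p (a i)) * Real.exp (t * ∑ i, z (a i)))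
        = (∏ i, p (a i)) * Real.exp (t * (∑ i, z (a i) - n * η)) := by
      rw [mul_left_comm, ← Real.exp_add]; ring_nf
    rw [e]
    split_ifs with h
    · have : 1 ≤ Real.exp (t * (∑ i, z (a i) - n * η)) :=
        Real.one_le_exp (mul_nonneg ht0.le (by linarith))
      nlinarith
    · exact mul_nonneg hP (Real.exp_pos _).le

/-! random coding -/

lemma avg_one {V : Type} [Fintype V] [DecidableEq V] {L : ℕ} (hL : 0 < L) :
    ∑ _F : V → Fin L, ∏ _v : V, (1 / L : ℝ) = 1 := by
  have hL' : (L : ℝ) ≠ 0 := by exact_mod_cast hL.ne'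
  rw [sum_prod_gen (fun (_ : V) (_ : Fin L) => (1 / L : ℝ))]
  simp [hL']

lemma avg_avoid {V : Type} [Fintype V] [DecidableEq V] {L : ℕ} (hL : 0 < L) (k0 : Fin L)
    (T : Finset V) :
    ∑ F : V → Fin L, (∏ _v : V, (1 / L : ℝ)) * (if ∃ w ∈ T, F w = k0 then 0 else 1)
      = (1 - 1 / L) ^ T.card := by
  have hL' : (L : ℝ) ≠ 0 := by exact_mod_cast hL.ne'
  have h := sum_prod_gen (fun (v : V) (k : Fin L) => (1 / L : ℝ) * (if v ∈ T ∧ k = k0 then 0 else 1))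
  have e : ∀ F : V → Fin L, ∏ v, ((1 / L : ℝ) * (if v ∈ T ∧ F v = k0 then 0 else 1))
      = (∏ _v : V, (1 / L : ℝ)) * (if ∃ w ∈ T, F w = k0 then 0 else 1) := by
    intro F
    rw [Finset.prod_mul_distrib]
    congr 1
    split_ifs with hw
    · obtain ⟨w, hw⟩ := hw
      exact Finset.prod_eq_zero (Finset.mem_univ w) (if_pos hw)
    · refine Finset.prod_eq_one fun v _ => if_neg fun hv => hw ⟨v, hv⟩
  simp only [e] at h
  rw [h]
  have e2 : ∀ v, ∑ k : Fin L, (1 / L : ℝ) * (if v ∈ T ∧ k = k0 then 0 else 1)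
      = if v ∈ T then 1 - 1 / (L : ℝ) else 1 := by
    intro v
    by_cases hv : v ∈ T
    · simp only [hv, true_and, if_true]
      have : ∀ k : Fin L, (1 / L : ℝ) * (if k = k0 then 0 else 1) = 1 / L - (if k = k0 then (1 / L : ℝ) else 0) := by
        intro k; split_ifs <;> simp
      simp only [this, Finset.sum_sub_distrib]
      simp [hL']
    · simp [hv, hL']
  simp only [e2]
  rw [Finset.prod_ite_mem]
  simp

lemma avg_hit {V : Type} [Fintype V] [DecidableEq V] {L : ℕ} (hL : 0 < L) (k0 : Fin L) (w : V) :
    ∑ F : V → Fin L, (∏ _v : V, (1 / L : ℝ)) * (if F w = k0 then 1 else 0) = 1 / L := by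
  have h1 := avg_avoid hL k0 {w}
  have h2 := avg_one (V := V) hL
  have : ∀ F : V → Fin L, (∏ _v : V, (1 / L : ℝ)) * (if F w = k0 then 1 else 0)
      = (∏ _v : V, (1 / L : ℝ)) - (∏ _v : V, (1 / L : ℝ)) * (if ∃ w' ∈ ({w} : Finset V), F w' = k0 then 0 else 1) := by
    intro F
    by_cases h : F w = k0 <;> simp [h]
  simp only [this, Finset.sum_sub_distrib]
  rw [h2, h1]; simp

lemma avg_coll {V : Type} [Fintype V] [DecidableEq V] {m : ℕ} (hm : 0 < m) {w w' : V} (hw : w' ≠ w) :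
    ∑ F : V → Fin m, (∏ _v : V, (1 / m : ℝ)) * (if F w' = F w then 1 else 0) = 1 / m := by
  have hm' : (m : ℝ) ≠ 0 := by exact_mod_cast hm.ne'
  have e : ∀ F : V → Fin m, (∏ _v : V, (1 / m : ℝ)) * (if F w' = F w then 1 else 0)
      = ∑ k : Fin m, ∏ v, ((1 / m : ℝ) * ((if v = w then (if F v = k then 1 else 0) else 1) *
          (if v = w' then (if F v = k then 1 else 0) else 1))) := by
    intro F
    simp only [Finset.prod_mul_distrib]
    rw [← Finset.mul_sum]
    congr 1
    simp only [Finset.prod_ite_eq', Finset.mem_univ, if_true]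
    simp [eq_comm]
  simp only [e]
  rw [Finset.sum_comm]
  have e2 : ∀ k : Fin m, ∑ F : V → Fin m, ∏ v, ((1 / m : ℝ) * ((if v = w then (if F v = k then 1 else 0) else 1) *
          (if v = w' then (if F v = k then 1 else 0) else 1))) = (1 / m) * (1 / m) := by
    intro k
    rw [sum_prod_gen (fun v (j : Fin m) => ((1 / m : ℝ) * ((if v = w then (if j = k then 1 else 0) else 1) *
          (if v = w' then (if j = k then 1 else 0) else 1))))]
    have : ∀ v, ∑ j : Fin m, ((1 / m : ℝ) * ((if v = w then (if j = k then 1 else 0) else 1) *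
          (if v = w' then (if j = k then 1 else 0) else 1)))
        = (if v = w then (1 / m : ℝ) else 1) * (if v = w' then (1 / m : ℝ) else 1) := by
      intro v
      by_cases h1 : v = w
      · subst h1; simp [hw.symm]
      · by_cases h2 : v = w'
        · subst h2; simp [h1]
        · simp [h1, h2, hm']
    simp only [this, Finset.prod_mul_distrib]
    simp
  simp only [e2]
  simp [hm']

/-- Random binning lemma. -/
lemma random_coding {S V : Type} [Fintype S] [Fintype V] [DecidableEq V] [Nonempty V] (P : S → ℝ)
    (hP : ∀ s, 0 ≤ P s) (hP1 : ∑ s, P s = 1) (D1 D2 : S → Finset V) (B : ℝ)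
    (hB1 : ∀ s, ((D1 s).card : ℝ) ≤ B) (hB2 : ∀ s, ((D2 s).card : ℝ) ≤ B)
    {L m : ℕ} (hL : 0 < L) (hm : 0 < m) :
    ∃ (C : Finset V) (M : V → Fin m) (enc : S → V),
      ∑ s, (if (enc s ∈ C ∧ enc s ∈ D1 s ∧ enc s ∈ D2 s ∧
          (∀ w ∈ C, w ∈ D1 s → M w = M (enc s) → w = enc s) ∧
          (∀ w ∈ C, w ∈ D2 s → M w = M (enc s) → w = enc s)) then 0 else P s)
      ≤ ∑ s, P s * (1 - 1 / L) ^ (D1 s ∩ D2 s).card + 2 * (B / (L * m)) := by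
  have hL' : (0 : ℝ) < L := by exact_mod_cast hL
  have hm' : (0 : ℝ) < m := by exact_mod_cast hm
  let k0 : Fin L := ⟨0, hL⟩
  let enc : (V → Fin L) → S → V := fun K s =>
    if h : ∃ w ∈ D1 s ∩ D2 s, K w = k0 then h.choose else Classical.arbitrary V
  let bad : (V → Fin L) → (V → Fin m) → S → ℝ := fun K M s =>
    (if ∃ w ∈ D1 s ∩ D2 s, K w = k0 then 0 else 1)
      + ∑ w ∈ D1 s, (if w ≠ enc K s then (if K w = k0 then 1 else 0) * (if M w = M (enc K s) then 1 else 0) else 0)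
      + ∑ w ∈ D2 s, (if w ≠ enc K s then (if K w = k0 then 1 else 0) * (if M w = M (enc K s) then 1 else 0) else 0)
  let cL : ℝ := ∏ _v : V, (1 / L : ℝ)
  let cm : ℝ := ∏ _v : V, (1 / m : ℝ)
  have hcL : 0 < cL := Finset.prod_pos fun _ _ => by positivity
  have hcm : 0 < cm := Finset.prod_pos fun _ _ => by positivity
  -- average over M
  have hcoll : ∀ (K : V → Fin L) (s : S) (D : Finset V),
      ∑ M : V → Fin m, cm * ∑ w ∈ D, (if w ≠ enc K s then (if K w = k0 then (1 : ℝ) else 0) * (if M w = M (enc K s) then 1 else 0) else 0)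
      ≤ ∑ w ∈ D, (1 / m : ℝ) * (if K w = k0 then 1 else 0) := by
    intro K s D
    simp only [Finset.mul_sum]
    rw [Finset.sum_comm]
    refine Finset.sum_le_sum fun w _ => ?_
    by_cases hw : w ≠ enc K s
    · simp only [if_pos hw]
      have := avg_coll hm hw
      calc _ = (∑ M : V → Fin m, cm * (if M w = M (enc K s) then 1 else 0)) * (if K w = k0 then (1 : ℝ) else 0) := by
            rw [Finset.sum_mul]
            exact Finset.sum_congr rfl fun M _ => by ring
        _ ≤ _ := by rw [this]
    · simp only [if_neg hw, mul_zero, Finset.sum_const_zero]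
      split_ifs <;> positivity
  have hcollK : ∀ (s : S) (D : Finset V), (D.card : ℝ) ≤ B →
      ∑ K : V → Fin L, cL * ∑ w ∈ D, (1 / m : ℝ) * (if K w = k0 then 1 else 0) ≤ B / (L * m) := by
    intro s D hD
    simp only [Finset.mul_sum]
    rw [Finset.sum_comm]
    have : ∀ w ∈ D, ∑ K : V → Fin L, cL * ((1 / m : ℝ) * (if K w = k0 then 1 else 0)) = 1 / m * (1 / L) := by
      intro w _
      rw [← avg_hit hL k0 w, Finset.mul_sum]
      exact Finset.sum_congr rfl fun K _ => by ring
    rw [Finset.sum_congr rfl this]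
    simp only [Finset.sum_const, nsmul_eq_mul]
    rw [show (D.card : ℝ) * (1 / m * (1 / L)) = D.card / (L * m) by field_simp]
    gcongr
  have havg : ∑ K : V → Fin L, cL * ∑ M : V → Fin m, cm * ∑ s, P s * bad K M s
      ≤ ∑ s, P s * (1 - 1 / L) ^ (D1 s ∩ D2 s).card + 2 * (B / (L * m)) := by
    have hK : ∀ (s : S), ∑ K : V → Fin L, cL * ∑ M : V → Fin m, cm * bad K M s
        ≤ (1 - 1 / L) ^ (D1 s ∩ D2 s).card + 2 * (B / (L * m)) := by
      intro s
      have h1 : ∀ K ∈ (Finset.univ : Finset (V → Fin L)), cL * ∑ M : V → Fin m, cm * bad K M s ≤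
          cL * (if ∃ w ∈ D1 s ∩ D2 s, K w = k0 then 0 else 1)
          + cL * (∑ w ∈ D1 s, (1 / m : ℝ) * (if K w = k0 then 1 else 0))
          + cL * (∑ w ∈ D2 s, (1 / m : ℝ) * (if K w = k0 then 1 else 0)) := by
        intro K _
        rw [← mul_add, ← mul_add]
        refine mul_le_mul_of_nonneg_left ?_ hcL.le
        simp only [bad, mul_add, Finset.sum_add_distrib]
        rw [← Finset.sum_mul]
        have := hcoll K s (D1 s)
        have := hcoll K s (D2 s)
        have h3 : ∑ _M : V → Fin m, cm = 1 := avg_one hm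
        rw [h3, one_mul]
        gcongr
      have h2 := Finset.sum_le_sum h1
      simp only [Finset.sum_add_distrib] at h2
      have h3 := hcollK s _ (hB1 s)
      have h4 := hcollK s _ (hB2 s)
      have h5 : ∑ K : V → Fin L, cL * (if ∃ w ∈ D1 s ∩ D2 s, K w = k0 then (0 : ℝ) else 1) = _ :=
        avg_avoid hL k0 (D1 s ∩ D2 s)
      linarith
    have e : ∑ K : V → Fin L, cL * ∑ M : V → Fin m, cm * ∑ s, P s * bad K M s
        = ∑ s, P s * ∑ K : V → Fin L, cL * ∑ M : V → Fin m, cm * bad K M s := by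
      simp only [Finset.mul_sum]
      symm
      rw [Finset.sum_comm]
      refine Finset.sum_congr rfl fun K _ => ?_
      rw [Finset.sum_comm]
      refine Finset.sum_congr rfl fun M _ => Finset.sum_congr rfl fun s _ => ?_
      ring
    rw [e]
    calc _ ≤ ∑ s, P s * ((1 - 1 / L) ^ (D1 s ∩ D2 s).card + 2 * (B / (L * m))) :=
          Finset.sum_le_sum fun s _ => mul_le_mul_of_nonneg_left (hK s) (hP s)
      _ = _ := by
        simp only [mul_add (P _), Finset.sum_add_distrib]
        rw [← Finset.sum_mul, hP1, one_mul]
  -- pick good K, M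
  have hex : ∃ K M, ∑ s, P s * bad K M s
      ≤ ∑ s, P s * (1 - 1 / L) ^ (D1 s ∩ D2 s).card + 2 * (B / (L * m)) := by
    by_contra! hcon
    set A := ∑ s, P s * (1 - 1 / (L:ℝ)) ^ (D1 s ∩ D2 s).card + 2 * (B / (L * m))
    have : A < A := by
      calc A = ∑ K : V → Fin L, cL * ∑ M : V → Fin m, cm * A := by
            rw [← Finset.sum_mul, ← Finset.sum_mul]
            have h3 : ∑ _M : V → Fin m, cm = 1 := avg_one hm
            have h4 : ∑ _M : V → Fin L, cL = 1 := avg_one hL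
            rw [h3, h4]; ring
        _ < ∑ K : V → Fin L, cL * ∑ M : V → Fin m, cm * ∑ s, P s * bad K M s := by
            have : Nonempty (Fin L) := ⟨k0⟩
            have : Nonempty (Fin m) := ⟨⟨0, hm⟩⟩
            refine Finset.sum_lt_sum_of_nonempty Finset.univ_nonempty fun K _ => ?_
            refine mul_lt_mul_of_pos_left ?_ hcL
            refine Finset.sum_lt_sum_of_nonempty Finset.univ_nonempty fun M _ => ?_
            exact mul_lt_mul_of_pos_left (hcon K M) hcm
        _ ≤ A := havg
    exact lt_irrefl _ this
  obtain ⟨K, M, hKM⟩ := hex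
  refine ⟨Finset.univ.filter fun w => K w = k0, M, enc K, le_trans (Finset.sum_le_sum fun s _ => ?_) hKM⟩
  have hsum : ∀ D : Finset V, 0 ≤ ∑ w ∈ D, (if w ≠ enc K s then (if K w = k0 then (1 : ℝ) else 0) * (if M w = M (enc K s) then 1 else 0) else 0) :=
    fun D => Finset.sum_nonneg fun w _ => by split_ifs <;> simp
  have hone : ∀ (D : Finset V) (w : V), w ∈ D → w ≠ enc K s → K w = k0 → M w = M (enc K s) →
      1 ≤ ∑ w ∈ D, (if w ≠ enc K s then (if K w = k0 then (1 : ℝ) else 0) * (if M w = M (enc K s) then 1 else 0) else 0) := by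
    intro D w hw h1 h2 h3
    have := Finset.single_le_sum (f := fun w => (if w ≠ enc K s then (if K w = k0 then (1 : ℝ) else 0) * (if M w = M (enc K s) then 1 else 0) else 0))
      (fun w _ => by split_ifs <;> simp) hw
    simpa [h1, h2, h3] using this
  have hbad0 : 0 ≤ bad K M s := by
    simp only [bad]
    have := hsum (D1 s)
    have := hsum (D2 s)
    split_ifs <;> positivity
  split_ifs with hg
  · exact mul_nonneg (hP s) hbad0
  · suffices 1 ≤ bad K M s by nlinarith [hP s]
    have hD1 := hsum (D1 s)
    have hD2 := hsum (D2 s)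
    simp only [bad]
    by_cases hw : ∃ w ∈ D1 s ∩ D2 s, K w = k0
    · have henc : enc K s = hw.choose := dif_pos hw
      have hspec := hw.choose_spec
      rw [← henc, Finset.mem_inter] at hspec
      rw [if_pos hw]
      by_contra hlt
      push Not at hlt
      refine hg ⟨by simp [hspec.2], hspec.1.1, hspec.1.2, ?_, ?_⟩
      · intro w hwC hwD hM
        by_contra hne
        have := hone (D1 s) w hwD hne (by simpa using hwC) hM
        linarith
      · intro w hwC hwD hM
        by_contra hne
        have := hone (D2 s) w hwD hne (by simpa using hwC) hM
        linarith
    · rw [if_neg hw]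
      linarith

end achiev

section achiev2
variable {ρ d α η : ℝ}

lemma dHam_nonneg (a b : Bool) : 0 ≤ dHam a b := by unfold dHam; split_ifs <;> simp
lemma dHam_le_one (a b : Bool) : dHam a b ≤ 1 := by unfold dHam; split_ifs <;> simp

/-- Hamming ball of radius `n (d+η)`. -/
def ball (t : ℝ) {n : ℕ} (v : Fin n → Bool) : Finset (Fin n → Bool) :=
  Finset.univ.filter fun w => ∑ i, dHam (v i) (w i) ≤ n * t

lemma mem_ball {t : ℝ} {n : ℕ} {v w : Fin n → Bool} :
    w ∈ ball t v ↔ ∑ i, dHam (v i) (w i) ≤ n * t := by simp [ball]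

lemma ball_card (hd0 : 0 < d) (hd1 : d ≤ 1 / 2) {n : ℕ} (v : Fin n → Bool) :
    ((ball (d + η) v).card : ℝ) ≤ Real.exp (n * (Real.log 2 * binEnt d + η * (Real.log (1 - d) - Real.log d))) := by
  have hΛ : 0 ≤ Real.log (1 - d) - Real.log d := by
    have := Real.log_le_log hd0 (by linarith : d ≤ 1 - d)
    linarith
  have h1 : ∑ w : Fin n → Bool, ∏ i, bsc d (v i) (w i) = 1 := by
    rw [sum_prod_gen (fun i (a : Bool) => bsc d (v i) a)]
    refine Finset.prod_eq_one fun i _ => ?_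
    rw [Fintype.sum_bool]
    cases v i <;> simp [bsc]
  have hpos : ∀ w : Fin n → Bool, 0 < ∏ i, bsc d (v i) (w i) := fun w =>
    Finset.prod_pos fun i _ => bsc_pos hd0 (by linarith) _ _
  have h2 : ∀ w ∈ ball (d + η) v,
      Real.exp (-(n * (Real.log 2 * binEnt d + η * (Real.log (1 - d) - Real.log d)))) ≤ ∏ i, bsc d (v i) (w i) := by
    intro w hw
    rw [mem_ball] at hw
    rw [← Real.exp_log (hpos w), Real.exp_le_exp,
      Real.log_prod (fun i _ => (bsc_pos hd0 (by linarith) _ _).ne'), binEnt_mul]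
    simp only [log_bsc, Finset.sum_sub_distrib, ← Finset.sum_mul]
    simp only [Finset.sum_const, Finset.card_univ, Fintype.card_fin, nsmul_eq_mul]
    have := mul_le_mul_of_nonneg_right hw hΛ
    linarith
  have h3 := (Finset.sum_le_sum h2).trans
    (Finset.sum_le_univ_sum_of_nonneg (fun w => (hpos w).le))
  rw [h1, Finset.sum_const, nsmul_eq_mul, Real.exp_neg] at h3
  rwa [← div_eq_mul_inv, div_le_one (Real.exp_pos _)] at h3

/-- test channel -/
def Wc (α : ℝ) (s : Bool × Bool) (w : Bool) : ℝ :=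
  if s.1 = s.2 then (if s.1 = w then 1 - α else α) else 1 / 2

lemma Wc_pos (h0 : 0 < α) (h1 : α < 1) (s w) : 0 < Wc α s w := by
  unfold Wc; split_ifs <;> linarith

lemma Wc_sum (α : ℝ) (s) : ∑ w, Wc α s w = 1 := by
  rw [Fintype.sum_bool]
  rcases s with ⟨a, b⟩
  cases a <;> cases b <;> simp [Wc] <;> norm_num

def Wn (α : ℝ) {n : ℕ} (s : (Fin n → Bool) × (Fin n → Bool)) (w : Fin n → Bool) : ℝ :=
  ∏ i, Wc α (s.1 i, s.2 i) (w i)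

lemma Wn_sum (α : ℝ) {n : ℕ} (s : (Fin n → Bool) × (Fin n → Bool)) : ∑ w, Wn α s w = 1 := by
  unfold Wn
  rw [sum_prod_gen (fun i (a : Bool) => Wc α (s.1 i, s.2 i) a)]
  exact Finset.prod_eq_one fun i _ => Wc_sum _ _

def bz (α η : ℝ) (z : (Bool × Bool) × Bool → ℝ) {n : ℕ} (s : (Fin n → Bool) × (Fin n → Bool)) : ℝ :=
  ∑ w, if n * η < ∑ i, z ((s.1 i, s.2 i), w i) then Wn α s w else 0

def p3 (ρ α : ℝ) (a : (Bool × Bool) × Bool) : ℝ := dsbs ρ a.1 * Wc α a.1 a.2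

lemma p3_sum (ρ α : ℝ) (z : (Bool × Bool) × Bool → ℝ) : ∑ a, p3 ρ α a * z a
    = (1 - ρ) / 2 * ((1 - α) * (z ((true, true), true) + z ((false, false), false))
      + α * (z ((true, true), false) + z ((false, false), true)))
      + ρ / 2 * (1 / 2 * (z ((true, false), true) + z ((true, false), false)
        + z ((false, true), true) + z ((false, true), false))) := by
  simp only [Fintype.sum_prod_type, Fintype.sum_bool, p3, dsbs, Wc]
  simp
  ring

lemma p3_sum_one (ρ α : ℝ) : ∑ a, p3 ρ α a = 1 := by
  have := p3_sum ρ α (fun _ => 1)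
  simp only [mul_one] at this
  rw [this]; ring

lemma bz_bound (hρ0 : 0 ≤ ρ) (hρ1 : ρ ≤ 1) (h0 : 0 < α) (h1 : α < 1) (hη : 0 < η)
    (z : (Bool × Bool) × Bool → ℝ) (hz : ∑ a, p3 ρ α a * z a = 0) :
    ∃ c, 0 ≤ c ∧ c < 1 ∧ ∀ n : ℕ, ∑ s : (Fin n → Bool) × (Fin n → Bool),
      iid (dsbs ρ) n s * bz α η z s ≤ c ^ n := by
  obtain ⟨c, hc0, hc1, hc⟩ := wlln (p3 ρ α)
    (fun a => mul_nonneg (dsbs_nonneg hρ0 hρ1 _) (Wc_pos h0 h1 _ _).le) (p3_sum_one ρ α) z hz.le hη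
  refine ⟨c, hc0, hc1, fun n => le_trans (le_of_eq ?_) (hc n)⟩
  rw [sum_pairE]
  simp only [bz, Finset.mul_sum]
  rw [← Fintype.sum_prod_type' (f := fun (a : Fin n → Bool × Bool) (w : Fin n → Bool) =>
    iid (dsbs ρ) n (fun i => (a i).1, fun i => (a i).2) *
      if n * η < ∑ i, z (((a i).1, (a i).2), w i) then Wn α (fun i => (a i).1, fun i => (a i).2) w else 0),
    sum_pairE]
  refine Finset.sum_congr rfl fun a _ => ?_
  simp only [Prod.mk.eta]
  split_ifs
  · simp [iid, Wn, p3, Finset.prod_mul_distrib]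
  · simp

def Hc (ρ α : ℝ) : ℝ := Real.log 2 * (ρ + (1 - ρ) * binEnt α)

def z1 (d : ℝ) (a : (Bool × Bool) × Bool) : ℝ := dHam a.1.1 a.2 - d
def z2 (d : ℝ) (a : (Bool × Bool) × Bool) : ℝ := dHam a.1.2 a.2 - d
def z3 (ρ α : ℝ) (a : (Bool × Bool) × Bool) : ℝ := Real.log (Wc α a.1 a.2) + Hc ρ α

lemma z1_mean (hd : d = ρ / 2 + (1 - ρ) * α) : ∑ a, p3 ρ α a * z1 d a = 0 := by
  rw [p3_sum, hd]; simp [z1, dHam]; ring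
lemma z2_mean (hd : d = ρ / 2 + (1 - ρ) * α) : ∑ a, p3 ρ α a * z2 d a = 0 := by
  rw [p3_sum, hd]; simp [z2, dHam]; ring
lemma z3_mean (ρ α : ℝ) : ∑ a, p3 ρ α a * z3 ρ α a = 0 := by
  rw [p3_sum]
  have h := binEnt_mul α
  have e : Hc ρ α = Real.log 2 * ρ + (1 - ρ) * (Real.log 2 * binEnt α) := by unfold Hc; ring
  simp only [z3, e, h, Wc]
  simp
  ring

lemma cover_pt (h0 : 0 < α) (h1 : α < 1) {n L : ℕ} (hL : 0 < L)
    (hL2 : (L : ℝ) ≤ 2 * Real.exp (n * (Hc ρ α - 2 * η)))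
    (s : (Fin n → Bool) × (Fin n → Bool)) :
    (1 - 1 / (L : ℝ)) ^ (ball (d + η) s.2 ∩ ball (d + η) s.1).card
      ≤ 4 * Real.exp (-(n * η)) + 2 * (bz α η (z1 d) s + bz α η (z2 d) s + bz α η (z3 ρ α) s) := by
  have hL' : (1 : ℝ) ≤ L := by exact_mod_cast hL
  set T := ball (d + η) s.2 ∩ ball (d + η) s.1 with hT
  have hW : ∀ w, 0 < Wn α s w := fun w => Finset.prod_pos fun i _ => Wc_pos h0 h1 _ _
  have hpt : ∀ w ∈ (Finset.univ : Finset (Fin n → Bool)), Wn α s w ≤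
      (if w ∈ T then Real.exp (-(n * (Hc ρ α - η))) else 0)
      + (if n * η < ∑ i, z1 d ((s.1 i, s.2 i), w i) then Wn α s w else 0)
      + (if n * η < ∑ i, z2 d ((s.1 i, s.2 i), w i) then Wn α s w else 0)
      + (if n * η < ∑ i, z3 ρ α ((s.1 i, s.2 i), w i) then Wn α s w else 0) := by
    intro w _
    have hw := hW w
    have he := Real.exp_pos (-(n * (Hc ρ α - η)))
    by_cases c1 : n * η < ∑ i, z1 d ((s.1 i, s.2 i), w i)
    · rw [if_pos c1]; split_ifs <;> linarith
    by_cases c2 : n * η < ∑ i, z2 d ((s.1 i, s.2 i), w i)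
    · rw [if_pos c2]; split_ifs <;> linarith
    by_cases c3 : n * η < ∑ i, z3 ρ α ((s.1 i, s.2 i), w i)
    · rw [if_pos c3]; split_ifs <;> linarith
    rw [if_neg c1, if_neg c2, if_neg c3]
    simp only [z1, z2, z3, Finset.sum_sub_distrib, Finset.sum_add_distrib, Finset.sum_const,
      Finset.card_univ, Fintype.card_fin, nsmul_eq_mul, not_lt] at c1 c2 c3
    have hmem : w ∈ T := by
      rw [hT, Finset.mem_inter, mem_ball, mem_ball]
      constructor <;> linarith
    rw [if_pos hmem, ← Real.exp_log hw, add_zero, add_zero, add_zero, Real.exp_le_exp, Wn,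
      Real.log_prod (fun i _ => (Wc_pos h0 h1 _ _).ne')]
    linarith
  have hsum := Finset.sum_le_sum hpt
  simp only [Finset.sum_add_distrib] at hsum
  rw [Wn_sum, Finset.sum_ite_mem, Finset.univ_inter, Finset.sum_const, nsmul_eq_mul] at hsum
  change 1 ≤ (T.card : ℝ) * Real.exp (-(n * (Hc ρ α - η))) + bz α η (z1 d) s + bz α η (z2 d) s + bz α η (z3 ρ α) s at hsum
  have hbase0 : 0 ≤ 1 - 1 / (L : ℝ) := by
    rw [sub_nonneg, div_le_one (by linarith)]; exact hL'
  have hbase1 : 1 - 1 / (L : ℝ) ≤ 1 := by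
    have : 0 ≤ 1 / (L : ℝ) := by positivity
    linarith
  have hnn := Real.exp_pos (-(n * η))
  by_cases hb : 1 / 2 ≤ bz α η (z1 d) s + bz α η (z2 d) s + bz α η (z3 ρ α) s
  · have := pow_le_one₀ (n := T.card) hbase0 hbase1
    linarith
  push Not at hb
  have hbn : ∀ z, 0 ≤ bz α η z s := fun z => Finset.sum_nonneg fun w _ => by
    split_ifs
    · exact (hW w).le
    · exact le_rfl
  have hT2 : 1 / 2 ≤ (T.card : ℝ) * Real.exp (-(n * (Hc ρ α - η))) := by linarith
  have hE : 0 < Real.exp (n * (Hc ρ α - η)) := Real.exp_pos _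
  have hT3 : Real.exp (n * (Hc ρ α - η)) / 2 ≤ T.card := by
    rw [Real.exp_neg, ← div_eq_mul_inv, le_div_iff₀ hE] at hT2
    linarith
  have hpow : (1 - 1 / (L : ℝ)) ^ T.card ≤ Real.exp (-(T.card / L)) := by
    have : 1 - 1 / (L : ℝ) ≤ Real.exp (-(1 / L)) := by
      have := Real.add_one_le_exp (-(1 / (L : ℝ)))
      linarith
    calc _ ≤ (Real.exp (-(1 / (L : ℝ)))) ^ T.card := pow_le_pow_left₀ hbase0 this _
      _ = _ := by rw [← Real.exp_nat_mul]; congr 1; ring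
  have hq : Real.exp (n * η) / 4 ≤ T.card / L := by
    rw [le_div_iff₀ (by linarith)]
    calc Real.exp (n * η) / 4 * L ≤ Real.exp (n * η) / 4 * (2 * Real.exp (n * (Hc ρ α - 2 * η))) := by
          gcongr
      _ = Real.exp (n * (Hc ρ α - η)) / 2 := by
          rw [show n * (Hc ρ α - η) = n * η + n * (Hc ρ α - 2 * η) by ring, Real.exp_add]; ring
      _ ≤ _ := hT3
  have hfin : Real.exp (-((T.card : ℝ) / L)) ≤ 4 * Real.exp (-(n * η)) := by
    rw [Real.exp_neg, Real.exp_neg]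
    have h5 : Real.exp (n * η) / 4 ≤ Real.exp ((T.card : ℝ) / L) := by
      have := Real.add_one_le_exp ((T.card : ℝ) / L)
      linarith
    calc (Real.exp ((T.card : ℝ) / L))⁻¹ ≤ (Real.exp (n * η) / 4)⁻¹ :=
          inv_anti₀ (by positivity) h5
      _ = _ := by rw [inv_div]; ring
  have := hbn (z1 d)
  have := hbn (z2 d)
  have := hbn (z3 ρ α)
  linarith

lemma code_exists (hρ0 : 0 ≤ ρ) (hρ1 : ρ ≤ 1) (hd0 : 0 < d) (hd1 : d ≤ 1 / 2)
    (h0 : 0 < α) (h1 : α < 1)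
    (hη : 0 < η) (hηH : 2 * η ≤ Hc ρ α) (hU : Hc ρ α ≤ Real.log 2 * binEnt d) {n : ℕ} (hn : 0 < n) :
    ∃ (m : ℕ) (f : (Fin n → Bool) × (Fin n → Bool) → Fin m)
      (g : Fin m × (Fin n → Bool) → Fin n → Bool) (E : ℝ),
      E ≤ 6 * Real.exp (-(n * η)) + 2 * (∑ s, iid (dsbs ρ) n s * bz α η (z1 d) s
        + ∑ s, iid (dsbs ρ) n s * bz α η (z2 d) s + ∑ s, iid (dsbs ρ) n s * bz α η (z3 ρ α) s) ∧
      Real.log m ≤ n * (Real.log 2 * binEnt d - Hc ρ α + η * (Real.log (1 - d) - Real.log d) + 3 * η) + Real.log 2 ∧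
      Delta1 (dsbs ρ) dHam f g ≤ d + η + E ∧ Delta2 (dsbs ρ) dHam f g ≤ d + η + E ∧
      (∑ s : (Fin n → Bool) × (Fin n → Bool),
        if g (f s, s.1) = g (f s, s.2) then 0 else iid (dsbs ρ) n s) ≤ E := by
  have hn' : (0 : ℝ) < n := by exact_mod_cast hn
  have hΛ : 0 ≤ Real.log (1 - d) - Real.log d := by
    have := Real.log_le_log hd0 (by linarith : d ≤ 1 - d)
    linarith
  have hceil : ∀ t : ℝ, 0 ≤ t → ∃ L : ℕ, 0 < L ∧ Real.exp t ≤ L ∧ (L : ℝ) ≤ 2 * Real.exp t := by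
    intro t ht
    refine ⟨⌈Real.exp t⌉₊, Nat.ceil_pos.2 (Real.exp_pos _), Nat.le_ceil _, ?_⟩
    have := Nat.ceil_lt_add_one (Real.exp_pos t).le
    have := Real.one_le_exp ht
    linarith
  obtain ⟨L, hL, hL1, hL2⟩ := hceil (n * (Hc ρ α - 2 * η)) (mul_nonneg hn'.le (by linarith))
  have hR : 0 ≤ Real.log 2 * binEnt d - Hc ρ α + η * (Real.log (1 - d) - Real.log d) + 3 * η := by
    have := mul_nonneg hη.le hΛ
    linarith
  obtain ⟨m, hm, hm1, hm2⟩ := hceil (n * (Real.log 2 * binEnt d - Hc ρ α + η * (Real.log (1 - d) - Real.log d) + 3 * η))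
    (mul_nonneg hn'.le hR)
  have hL' : (0 : ℝ) < L := by exact_mod_cast hL
  have hm' : (0 : ℝ) < m := by exact_mod_cast hm
  obtain ⟨C, M, enc, hE⟩ := random_coding (V := Fin n → Bool) (iid (dsbs ρ) n) (iid_nonneg hρ0 hρ1 n) (iid_sum_one ρ n)
    (fun s => ball (d + η) s.2) (fun s => ball (d + η) s.1)
    (Real.exp (n * (Real.log 2 * binEnt d + η * (Real.log (1 - d) - Real.log d))))
    (fun s => ball_card hd0 hd1 _) (fun s => ball_card hd0 hd1 _) hL hm
  let G : (Fin n → Bool) × (Fin n → Bool) → Prop := fun s => (enc s ∈ C ∧ enc s ∈ ball (d + η) s.2 ∧ enc s ∈ ball (d + η) s.1 ∧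
          (∀ w ∈ C, w ∈ ball (d + η) s.2 → M w = M (enc s) → w = enc s) ∧
          (∀ w ∈ C, w ∈ ball (d + η) s.1 → M w = M (enc s) → w = enc s))
  let g : Fin m × (Fin n → Bool) → Fin n → Bool := fun k =>
    if h : ∃ w ∈ C, w ∈ ball (d + η) k.2 ∧ M w = k.1 then h.choose else k.2
  have hgood1 : ∀ s, G s → g (M (enc s), s.2) = enc s := by
    intro s hs
    have h : ∃ w ∈ C, w ∈ ball (d + η) s.2 ∧ M w = M (enc s) := ⟨enc s, hs.1, hs.2.1, rfl⟩
    have e : g (M (enc s), s.2) = h.choose := dif_pos h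
    rw [e]
    exact hs.2.2.2.1 _ h.choose_spec.1 h.choose_spec.2.1 h.choose_spec.2.2
  have hgood2 : ∀ s, G s → g (M (enc s), s.1) = enc s := by
    intro s hs
    have h : ∃ w ∈ C, w ∈ ball (d + η) s.1 ∧ M w = M (enc s) := ⟨enc s, hs.1, hs.2.2.1, rfl⟩
    have e : g (M (enc s), s.1) = h.choose := dif_pos h
    rw [e]
    exact hs.2.2.2.2 _ h.choose_spec.1 h.choose_spec.2.1 h.choose_spec.2.2
  have hdist : ∀ (v : (Fin n → Bool) × (Fin n → Bool) → (Fin n → Bool)) (w : (Fin n → Bool) × (Fin n → Bool) → (Fin n → Bool)),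
      (∀ s, G s → w s ∈ ball (d + η) (v s)) →
      ∑ s, iid (dsbs ρ) n s * ((n : ℝ)⁻¹ * ∑ i, dHam (v s i) (w s i))
        ≤ d + η + ∑ s, (if G s then 0 else iid (dsbs ρ) n s) := by
    intro v w hvw
    have : ∀ s ∈ Finset.univ, iid (dsbs ρ) n s * ((n : ℝ)⁻¹ * ∑ i, dHam (v s i) (w s i))
        ≤ iid (dsbs ρ) n s * (d + η) + (if G s then 0 else iid (dsbs ρ) n s) := by
      intro s _
      have hP := iid_nonneg hρ0 hρ1 n s
      split_ifs with hs
      · have h5 := mem_ball.1 (hvw s hs)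
        rw [add_zero]
        refine mul_le_mul_of_nonneg_left ?_ hP
        rw [inv_mul_le_iff₀ hn']
        exact h5
      · have h5 : ∑ i, dHam (v s i) (w s i) ≤ n * 1 := by
          have := Finset.sum_le_sum (fun i (_ : i ∈ Finset.univ) => dHam_le_one (v s i) (w s i))
          simpa using this
        have h6 := (inv_mul_le_iff₀ hn').2 h5
        have := mul_le_mul_of_nonneg_left h6 hP
        have := mul_nonneg hP (by linarith : 0 ≤ d + η)
        linarith
    have h7 := Finset.sum_le_sum this
    rw [Finset.sum_add_distrib, ← Finset.sum_mul, iid_sum_one, one_mul] at h7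
    exact h7
  refine ⟨m, fun s => M (enc s), g, ∑ s, (if G s then 0 else iid (dsbs ρ) n s), ?_, ?_, ?_, ?_, ?_⟩
  · have hE' : ∑ s, (if G s then 0 else iid (dsbs ρ) n s) ≤
        ∑ s, iid (dsbs ρ) n s * (1 - 1 / (L:ℝ)) ^ (ball (d + η) s.2 ∩ ball (d + η) s.1).card
        + 2 * (Real.exp (n * (Real.log 2 * binEnt d + η * (Real.log (1 - d) - Real.log d))) / (L * m)) := by
      convert hE
    refine hE'.trans ?_
    have hc : ∑ s, iid (dsbs ρ) n s * (1 - 1 / (L : ℝ)) ^ (ball (d + η) s.2 ∩ ball (d + η) s.1).card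
        ≤ 4 * Real.exp (-(n * η)) + 2 * (∑ s, iid (dsbs ρ) n s * bz α η (z1 d) s
        + ∑ s, iid (dsbs ρ) n s * bz α η (z2 d) s + ∑ s, iid (dsbs ρ) n s * bz α η (z3 ρ α) s) := by
      calc _ ≤ ∑ s, (iid (dsbs ρ) n s * (4 * Real.exp (-(n * η))) + 2 * (iid (dsbs ρ) n s * bz α η (z1 d) s
        + iid (dsbs ρ) n s * bz α η (z2 d) s + iid (dsbs ρ) n s * bz α η (z3 ρ α) s)) := by
            refine Finset.sum_le_sum fun s _ => ?_
            have := mul_le_mul_of_nonneg_left (cover_pt (d := d) h0 h1 hL hL2 s) (iid_nonneg hρ0 hρ1 n s)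
            linarith
        _ = _ := by
            rw [Finset.sum_add_distrib, ← Finset.sum_mul, iid_sum_one, one_mul, ← Finset.mul_sum]
            simp only [Finset.sum_add_distrib]
    have hq : Real.exp (n * (Real.log 2 * binEnt d + η * (Real.log (1 - d) - Real.log d))) / (L * m)
        ≤ Real.exp (-(n * η)) := by
      rw [div_le_iff₀ (by positivity)]
      calc _ = Real.exp (-(n * η)) * (Real.exp (n * (Hc ρ α - 2 * η)) *
          Real.exp (n * (Real.log 2 * binEnt d - Hc ρ α + η * (Real.log (1 - d) - Real.log d) + 3 * η))) := by
            rw [← Real.exp_add, ← Real.exp_add]; congr 1; ring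
        _ ≤ _ := by gcongr
    linarith
  · calc Real.log m ≤ Real.log (2 * Real.exp (n * (Real.log 2 * binEnt d - Hc ρ α + η * (Real.log (1 - d) - Real.log d) + 3 * η))) :=
          Real.log_le_log hm' hm2
      _ = _ := by rw [Real.log_mul (by norm_num) (Real.exp_pos _).ne', Real.log_exp]; ring
  · exact hdist (fun s => s.1) (fun s => g (M (enc s), s.2)) fun s hs => by
      simp only [hgood1 s hs]; exact hs.2.2.1
  · exact hdist (fun s => s.2) (fun s => g (M (enc s), s.1)) fun s hs => by
      simp only [hgood2 s hs]; exact hs.2.1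
  · refine Finset.sum_le_sum fun s _ => ?_
    have hP := iid_nonneg hρ0 hρ1 n s
    by_cases hs : G s
    · rw [if_pos (by rw [hgood1 s hs, hgood2 s hs]), if_pos hs]
    · rw [if_neg hs]; split_ifs <;> linarith

lemma achievable (hρ0 : 0 ≤ ρ) (hρ1 : ρ < 1) (hd0 : 0 < d) (hd1 : d ≤ 1 / 2)
    (h0 : 0 < α) (h1 : α < 1) (hd : d = ρ / 2 + (1 - ρ) * α)
    (hH : 0 < Hc ρ α) (hU : Hc ρ α ≤ Real.log 2 * binEnt d) :
    CRAchievable (dsbs ρ) (dHam (α := Bool)) (dHam (α := Bool)) d d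
      (binEnt d - ρ - (1 - ρ) * binEnt α) := by
  intro ε hε
  have hl2 : 0 < Real.log 2 := Real.log_pos one_lt_two
  have hΛ : 0 ≤ Real.log (1 - d) - Real.log d := by
    have := Real.log_le_log hd0 (by linarith : d ≤ 1 - d)
    linarith
  set Λ := Real.log (1 - d) - Real.log d with hΛd
  obtain ⟨η, hη, hη1, hη2, hη3⟩ : ∃ η > 0, 2 * η ≤ Hc ρ α ∧ η * (Λ + 3) ≤ ε / 2 * Real.log 2 ∧ η ≤ ε / 2 := by
    refine ⟨min (Hc ρ α / 2) (min (ε / 2 * Real.log 2 / (Λ + 3)) (ε / 2)), by positivity, ?_, ?_, ?_⟩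
    · have := min_le_left (Hc ρ α / 2) (min (ε / 2 * Real.log 2 / (Λ + 3)) (ε / 2))
      linarith
    · rw [← le_div_iff₀ (by linarith)]
      exact (min_le_right _ _).trans (min_le_left _ _)
    · exact (min_le_right _ _).trans (min_le_right _ _)
  obtain ⟨c1, hc10, hc11, hc1⟩ := bz_bound hρ0 hρ1.le h0 h1 hη _ (z1_mean hd)
  obtain ⟨c2, hc20, hc21, hc2⟩ := bz_bound hρ0 hρ1.le h0 h1 hη _ (z2_mean hd)
  obtain ⟨c3, hc30, hc31, hc3⟩ := bz_bound hρ0 hρ1.le h0 h1 hη _ (z3_mean ρ α)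
  have hlim : Filter.Tendsto (fun n : ℕ => 6 * (Real.exp (-η)) ^ n + 2 * (c1 ^ n + c2 ^ n + c3 ^ n))
      Filter.atTop (nhds (6 * 0 + 2 * (0 + 0 + 0))) :=
    ((tendsto_pow_atTop_nhds_zero_of_lt_one (Real.exp_pos _).le
      (by rw [Real.exp_lt_one_iff]; linarith)).const_mul 6).add
    ((((tendsto_pow_atTop_nhds_zero_of_lt_one hc10 hc11).add
      (tendsto_pow_atTop_nhds_zero_of_lt_one hc20 hc21)).add
      (tendsto_pow_atTop_nhds_zero_of_lt_one hc30 hc31)).const_mul 2)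
  have hev1 := hlim.eventually (ge_mem_nhds (show (6 * 0 + 2 * (0 + 0 + 0) : ℝ) < ε / 2 by norm_num; linarith))
  have hev2 := (tendsto_one_div_atTop_nhds_zero_nat (𝕜 := ℝ)).eventually
    (ge_mem_nhds (show (0 : ℝ) < ε / 2 by linarith))
  obtain ⟨n, ⟨hn1, hn2⟩, hn⟩ := ((hev1.and hev2).and (Filter.eventually_gt_atTop 0)).exists
  have hn' : (0 : ℝ) < n := by exact_mod_cast hn
  obtain ⟨m, f, g, E, hE, hm, hD1, hD2, he⟩ := code_exists hρ0 hρ1.le hd0 hd1 h0 h1 hη hη1 hU hn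
  have hE2 : E ≤ ε / 2 := by
    refine hE.trans (le_trans ?_ hn1)
    have e : Real.exp (-(n * η)) = Real.exp (-η) ^ n := by
      rw [← Real.exp_nat_mul]; congr 1; ring
    rw [e]
    have := hc1 n
    have := hc2 n
    have := hc3 n
    linarith
  refine ⟨n, m, f, g, g, g, g, hn, ?_, by linarith, by linarith, ?_, ?_⟩
  · rw [div_le_iff₀ hn', Real.logb, div_le_iff₀ hl2]
    refine hm.trans ?_
    have h6 : 1 ≤ ε / 2 * n := by rwa [div_le_iff₀ hn'] at hn2
    have h7 := mul_le_mul_of_nonneg_left hη2 hn'.le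
    have h8 := mul_le_mul_of_nonneg_right h6 hl2.le
    unfold Hc
    linarith
  · refine le_trans (le_of_eq ?_) (he.trans (by linarith : E ≤ ε))
    exact Finset.sum_congr rfl fun s _ => by congr
  · refine le_trans (le_of_eq ?_) (he.trans (by linarith : E ≤ ε))
    refine Finset.sum_congr rfl fun s _ => ?_
    by_cases h : g (f s, s.1) = g (f s, s.2)
    · rw [if_pos h, if_pos h.symm]
    · rw [if_neg h, if_neg (fun h' => h h'.symm)]

end achiev2

end TWRAux

open TWR in
/-- Theorem 3, part (iii): for the DSBS with Hamming
distortions and `d ∈ (d*, 1/2]`, `R_CR(d,d) ≠ h(ρ) − h(d)` and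
`R_CR(d,d) ≤ h(d) − ρ − (1−ρ)·h((2d−ρ)/(2(1−ρ)))`. -/
theorem dsbs_cr_large_distortion
    (ρ : ℝ) (hρ : ρ ∈ Set.Icc (0 : ℝ) (1 / 2)) (d : ℝ)
    (hdlo : 1 / 2 - Real.sqrt (1 - 2 * ρ) / 2 < d) (hdhi : d ≤ 1 / 2) :
    CRRD (dsbs ρ) (dHam (α := Bool)) (dHam (α := Bool)) d d ≠ binEnt ρ - binEnt d ∧
    CRRD (dsbs ρ) (dHam (α := Bool)) (dHam (α := Bool)) d d ≤
      binEnt d - ρ - (1 - ρ) * binEnt ((2 * d - ρ) / (2 * (1 - ρ))) := by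
  obtain ⟨hρ0, hρ1⟩ := hρ
  have hl2 : 0 < Real.log 2 := Real.log_pos one_lt_two
  have hsq := Real.sq_sqrt (show 0 ≤ 1 - 2 * ρ by linarith)
  have hsn := Real.sqrt_nonneg (1 - 2 * ρ)
  set q := Real.sqrt (1 - 2 * ρ) with hq
  have hγ : 0 < 1 - 2 * ρ - (1 - 2 * d) ^ 2 := by nlinarith
  have hρ2 : ρ < 1 / 2 := by nlinarith [sq_nonneg (1 - 2 * d)]
  have hq1 : q ≤ 1 := by nlinarith
  have hd0 : 0 < d := by linarith
  have h2d : ρ < 2 * d := by nlinarith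
  have hb : ∀ x, binEnt x = Real.binEntropy x / Real.log 2 := by
    intro x
    rw [eq_div_iff hl2.ne', mul_comm, TWRAux.binEnt_mul, Real.binEntropy, Real.log_inv, Real.log_inv]
    ring
  set α := (2 * d - ρ) / (2 * (1 - ρ)) with hα
  have hα0 : 0 < α := div_pos (by linarith) (by linarith)
  have hα1 : α < 1 := by rw [hα, div_lt_one (by linarith)]; linarith
  have hd : d = ρ / 2 + (1 - ρ) * α := by
    rw [hα]
    have : 1 - ρ ≠ 0 := by linarith
    field_simp
    ring
  have hαe : 0 < binEnt α := by
    rw [hb]; exact div_pos (Real.binEntropy_pos hα0 hα1) hl2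
  have hH : 0 < TWRAux.Hc ρ α := by
    unfold TWRAux.Hc
    have : 0 < (1 - ρ) * binEnt α := mul_pos (by linarith) hαe
    exact mul_pos hl2 (by linarith)
  have hU : ρ + (1 - ρ) * binEnt α ≤ binEnt d := by
    have hc := Real.strictConcave_binEntropy.concaveOn.2 (x := 2⁻¹) (y := α)
      ⟨by norm_num, by norm_num⟩ ⟨hα0.le, hα1.le⟩ hρ0 (by linarith : 0 ≤ 1 - ρ) (by ring)
    simp only [smul_eq_mul] at hc
    rw [Real.binEntropy_two_inv, show ρ * 2⁻¹ + (1 - ρ) * α = d by rw [hd]; ring] at hc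
    rw [hb, hb, le_div_iff₀ hl2]
    calc _ = ρ * Real.log 2 + (1 - ρ) * Real.binEntropy α := by field_simp
      _ ≤ _ := hc
  have hach := TWRAux.achievable hρ0 (by linarith) hd0 hdhi hα0 hα1 hd hH
    (by unfold TWRAux.Hc; exact mul_le_mul_of_nonneg_left hU hl2.le)
  have hmem : binEnt d - ρ - (1 - ρ) * binEnt α ∈ {r : ℝ | 0 ≤ r ∧
      CRAchievable (dsbs ρ) (dHam (α := Bool)) (dHam (α := Bool)) d d r} := ⟨by linarith, hach⟩
  refine ⟨?_, csInf_le ⟨0, fun r hr => hr.1⟩ hmem⟩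
  rcases hρ0.eq_or_lt with h0 | h0
  · have hnn : 0 ≤ CRRD (dsbs ρ) (dHam (α := Bool)) (dHam (α := Bool)) d d :=
      Real.sInf_nonneg fun r hr => hr.1
    have h1 : binEnt ρ = 0 := by rw [← h0]; simp [binEnt]
    have h2 : 0 < binEnt d := by
      rw [hb]; exact div_pos (Real.binEntropy_pos hd0 (by linarith)) hl2
    intro h
    linarith
  · obtain ⟨c, hc, hconv⟩ := TWRAux.converse h0 (by linarith) hd0 hdhi hγ
    have : binEnt ρ - binEnt d + c ≤ CRRD (dsbs ρ) (dHam (α := Bool)) (dHam (α := Bool)) d d :=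
      le_csInf ⟨_, hmem⟩ fun r hr => hconv r hr.2
    intro h
    linarith
end
end

section
/- If a distortion pair (d1,d2) ∈ ℝ₊² is achievable with bandwidth expansion κ, then there exists a pmf p_W on 𝒲 such that R_{X|Y}(d1) ≤ κ·I(W;U) and R_{Y|X}(d2) ≤ κ·I(W;V). -/
open scoped BigOperators Classical

noncomputable section

namespace TWRaux

open TWR

lemma sum_prod_marg {m : ℕ} {β : Type} [Fintype β] (a : Fin m → β → ℝ)
    (ha : ∀ k, ∑ b, a k b = 1) (j : Fin m) (φ : β → ℝ) :
    ∑ u : Fin m → β, (∏ k, a k (u k)) * φ (u j) = ∑ b, a j b * φ b := by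
  have h1 : ∀ u : Fin m → β, (∏ k, a k (u k)) * φ (u j)
      = ∏ k, (a k (u k) * if k = j then φ (u k) else 1) := by
    intro u
    rw [Finset.prod_mul_distrib]
    congr 1
    simp
  simp_rw [h1]
  have h2 := Finset.prod_univ_sum (fun _ : Fin m => (Finset.univ : Finset β))
    (fun k b => a k b * if k = j then φ b else 1)
  rw [Fintype.piFinset_univ] at h2
  rw [← h2, ← Finset.mul_prod_erase Finset.univ _ (Finset.mem_univ j)]
  simp only [if_true]
  rw [Finset.prod_eq_one, mul_one]
  intro k hk
  simp [Finset.ne_of_mem_erase hk, ha]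

lemma sum_prod_one {m : ℕ} {β : Type} [Fintype β] (a : Fin m → β → ℝ) :
    ∑ u : Fin m → β, (∏ k, a k (u k)) = ∏ k, ∑ b, a k b := by
  have h2 := Finset.prod_univ_sum (fun _ : Fin m => (Finset.univ : Finset β)) a
  rw [Fintype.piFinset_univ] at h2
  exact h2.symm

lemma sum_src {n : ℕ} {α β : Type} [Fintype α] [Fintype β] (F : (Fin n → α) → (Fin n → β) → ℝ) :
    ∑ x, ∑ y, F x y = ∑ s : Fin n → α × β, F (fun i => (s i).1) (fun i => (s i).2) := by
  rw [← Fintype.sum_prod_type']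
  exact (Fintype.sum_equiv (Equiv.arrowProdEquivProdArrow (Fin n) (fun _ => α) (fun _ => β)) _ _
    (fun s => rfl)).symm

lemma src_marg {n : ℕ} {α β : Type} [Fintype α] [Fintype β] (q : α × β → ℝ)
    (hq : IsPmf q) (i : Fin n) (φ : α × β → ℝ) :
    ∑ x : Fin n → α, ∑ y : Fin n → β, (∏ k, q (x k, y k)) * φ (x i, y i) = ∑ t, q t * φ t := by
  rw [sum_src (fun x y => (∏ k, q (x k, y k)) * φ (x i, y i))]
  exact sum_prod_marg (fun _ => q) (fun _ => hq.2) i φ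

/-- empirical average law -/
def emp {Ω α : Type} [Fintype Ω] {n : ℕ} (P : Ω → ℝ) (A : Fin n → Ω → α) (a : α) : ℝ :=
  (n : ℝ)⁻¹ * ∑ ω, P ω * ∑ i, if A i ω = a then 1 else 0

lemma emp_sum {Ω α : Type} [Fintype Ω] [Fintype α] {n : ℕ} (P : Ω → ℝ) (A : Fin n → Ω → α)
    (φ : α → ℝ) : ∑ a, emp P A a * φ a = (n : ℝ)⁻¹ * ∑ ω, P ω * ∑ i, φ (A i ω) := by
  have : ∀ a, emp P A a * φ a = (n : ℝ)⁻¹ * ∑ ω, P ω * ∑ i, if A i ω = a then φ a else 0 := by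
    intro a
    unfold emp
    rw [mul_assoc, Finset.sum_mul]
    congr 1
    refine Finset.sum_congr rfl fun ω _ => ?_
    rw [mul_assoc, Finset.sum_mul]
    congr 1
    refine Finset.sum_congr rfl fun i _ => ?_
    split_ifs <;> simp
  simp_rw [this]
  rw [← Finset.mul_sum, Finset.sum_comm]
  congr 1
  refine Finset.sum_congr rfl fun ω _ => ?_
  rw [← Finset.mul_sum, Finset.sum_comm]
  simp

lemma emp_nonneg {Ω α : Type} [Fintype Ω] {n : ℕ} (P : Ω → ℝ) (hP : ∀ ω, 0 ≤ P ω)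
    (A : Fin n → Ω → α) (a : α) : 0 ≤ emp P A a := by
  unfold emp
  refine mul_nonneg (by positivity) (Finset.sum_nonneg fun ω _ => mul_nonneg (hP ω)
    (Finset.sum_nonneg fun i _ => ?_))
  split_ifs <;> norm_num

lemma emp_pos {Ω α : Type} [Fintype Ω] {n : ℕ} (P : Ω → ℝ) (hP : ∀ ω, 0 ≤ P ω)
    (A : Fin n → Ω → α) (i : Fin n) (ω : Ω) (h : 0 < P ω) : 0 < emp P A (A i ω) := by
  unfold emp
  have hn : 0 < n := i.pos
  refine mul_pos (by positivity) ?_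
  refine Finset.sum_pos' (fun ω _ => mul_nonneg (hP ω)
    (Finset.sum_nonneg fun i _ => ?_)) ⟨ω, Finset.mem_univ _, mul_pos h ?_⟩
  · split_ifs <;> norm_num
  · refine Finset.sum_pos' (fun i _ => ?_) ⟨i, Finset.mem_univ _, by simp⟩
    split_ifs <;> norm_num

lemma MI_eq {α β : Type} [Fintype α] [Fintype β] (p : α × β → ℝ) :
    MI p = ∑ t : α × β, p t * (Real.logb 2 (p t) - Real.logb 2 (∑ b, p (t.1, b))
      - Real.logb 2 (∑ a, p (a, t.2))) := by
  unfold MI H2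
  simp only [mul_sub, Finset.sum_sub_distrib]
  have h1 : ∑ t : α × β, p t * Real.logb 2 (∑ b, p (t.1, b))
      = ∑ a, (∑ b, p (a, b)) * Real.logb 2 (∑ b, p (a, b)) := by
    rw [Fintype.sum_prod_type]
    simp only [Finset.sum_mul]
  have h2 : ∑ t : α × β, p t * Real.logb 2 (∑ a, p (a, t.2))
      = ∑ b, (∑ a, p (a, b)) * Real.logb 2 (∑ a, p (a, b)) := by
    rw [Fintype.sum_prod_type_right]
    simp only [Finset.sum_mul]
  rw [h1, h2]
  ring

lemma condMI_eq {α β γ : Type} [Fintype α] [Fintype β] [Fintype γ] (p : α × β × γ → ℝ) :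
    condMI p = ∑ t : α × β × γ, p t * (Real.logb 2 (p t)
      + Real.logb 2 (∑ a, ∑ c, p (a, t.2.1, c))
      - Real.logb 2 (∑ c, p (t.1, t.2.1, c))
      - Real.logb 2 (∑ a, p (a, t.2.1, t.2.2))) := by
  unfold condMI H2
  simp only [mul_sub, mul_add, Finset.sum_sub_distrib, Finset.sum_add_distrib]
  have h1 : ∑ t : α × β × γ, p t * Real.logb 2 (∑ a, ∑ c, p (a, t.2.1, c))
      = ∑ b, (∑ a, ∑ c, p (a, b, c)) * Real.logb 2 (∑ a, ∑ c, p (a, b, c)) := by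
    rw [Fintype.sum_prod_type]
    simp only [Fintype.sum_prod_type, Finset.sum_mul]
    rw [Finset.sum_comm]
  have h2 : ∑ t : α × β × γ, p t * Real.logb 2 (∑ c, p (t.1, t.2.1, c))
      = ∑ ab : α × β, (∑ c, p (ab.1, ab.2, c)) * Real.logb 2 (∑ c, p (ab.1, ab.2, c)) := by
    simp only [Fintype.sum_prod_type, Finset.sum_mul]
  have h3 : ∑ t : α × β × γ, p t * Real.logb 2 (∑ a, p (a, t.2.1, t.2.2))
      = ∑ bc : β × γ, (∑ a, p (a, bc.1, bc.2)) * Real.logb 2 (∑ a, p (a, bc.1, bc.2)) := by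
    rw [Fintype.sum_prod_type_right]
    simp only [Finset.sum_mul]
  rw [h1, h2, h3]
  ring

lemma gibbs {Ω : Type} [Fintype Ω] (P M : Ω → ℝ) (hP : ∀ ω, 0 ≤ P ω) (hM : ∀ ω, 0 ≤ M ω)
    (hPM : ∀ ω, 0 < P ω → 0 < M ω) (hs : ∑ ω, M ω ≤ ∑ ω, P ω) :
    0 ≤ ∑ ω, P ω * (Real.logb 2 (P ω) - Real.logb 2 (M ω)) := by
  have hl : 0 < Real.log 2 := Real.log_pos (by norm_num)
  have key : ∀ ω, (P ω - M ω) / Real.log 2 ≤ P ω * (Real.logb 2 (P ω) - Real.logb 2 (M ω)) := by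
    intro ω
    rcases (hP ω).eq_or_lt with h | h
    · rw [← h]
      have := hM ω
      simp only [zero_sub, zero_mul]
      exact div_nonpos_of_nonpos_of_nonneg (by linarith) hl.le
    · have hm := hPM ω h
      unfold Real.logb
      rw [← sub_div, ← mul_div_assoc]
      refine div_le_div_of_nonneg_right ?_ hl.le
      have h1 := Real.log_le_sub_one_of_pos (div_pos hm h)
      rw [Real.log_div hm.ne' h.ne'] at h1
      have h2 := mul_le_mul_of_nonneg_left h1 h.le
      have h3 : P ω * (M ω / P ω - 1) = M ω - P ω := by field_simp
      rw [h3] at h2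
      linarith
  calc (0 : ℝ) ≤ (∑ ω, P ω - ∑ ω, M ω) / Real.log 2 := div_nonneg (by linarith) hl.le
    _ = ∑ ω, (P ω - M ω) / Real.log 2 := by rw [← Finset.sum_sub_distrib, Finset.sum_div]
    _ ≤ _ := Finset.sum_le_sum fun ω _ => key ω

/-- time-averaged input law -/
def avgW {α β γ : Type} [Fintype α] [Fintype β] {n m : ℕ} (q : α × β → ℝ)
    (f : (Fin n → α) → (Fin n → β) → Fin m → γ) (w : γ) : ℝ :=
  (m : ℝ)⁻¹ * ∑ x : Fin n → α, ∑ y : Fin n → β, (∏ i, q (x i, y i)) *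
    ∑ j, if f x y j = w then 1 else 0

lemma core {α β ζ γ υ : Type} [Fintype α] [Fintype β] [Fintype ζ] [Fintype γ] [Fintype υ]
    [Nonempty ζ] (q : α × β → ℝ) (hq : IsPmf q) (c : γ → υ → ℝ) (hc : IsCondPmf c)
    {n m : ℕ} (hn : 0 < n) (hm : 0 < m)
    (f : (Fin n → α) → (Fin n → β) → Fin m → γ)
    (g : (Fin m → υ) × (Fin n → β) → Fin n → ζ) (δ : α → ζ → ℝ) :
    IsPmf (avgW q f) ∧ ∃ K : α × β → ζ → ℝ, IsCondPmf K ∧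
      (∑ x, ∑ y, ∑ z, q (x, y) * K (x, y) z * δ x z) =
        ∑ x : Fin n → α, ∑ y : Fin n → β, ∑ u : Fin m → υ,
          ((∏ i, q (x i, y i)) * ∏ j, c (f x y j) (u j)) *
            ((n : ℝ)⁻¹ * ∑ i, δ (x i) (g (u, y) i)) ∧
      (n : ℝ) * condMI (fun t : α × β × ζ => q (t.1, t.2.1) * K (t.1, t.2.1) t.2.2)
        ≤ (m : ℝ) * MI (fun t : γ × υ => avgW q f t.1 * c t.1 t.2) := by
  have hn' : (n : ℝ) ≠ 0 := by positivity
  have hm' : (m : ℝ) ≠ 0 := by positivity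
  have hq0 := hq.1
  have hc0 : ∀ w u, 0 ≤ c w u := fun w => (hc w).1
  have hc1 : ∀ w, ∑ u, c w u = 1 := fun w => (hc w).2
  let Ω := (Fin n → α) × (Fin n → β) × (Fin m → υ)
  let P : Ω → ℝ := fun ω => (∏ i, q (ω.1 i, ω.2.1 i)) * ∏ j, c (f ω.1 ω.2.1 j) (ω.2.2 j)
  have hP0 : ∀ ω, 0 ≤ P ω := fun ω => mul_nonneg (Finset.prod_nonneg fun i _ => hq0 _)
    (Finset.prod_nonneg fun j _ => hc0 _ _)
  have hPq : ∀ ω, 0 < P ω → ∀ i, 0 < q (ω.1 i, ω.2.1 i) := by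
    intro ω h i
    refine lt_of_le_of_ne (hq0 _) fun h0 => h.ne' ?_
    simp only [P]
    rw [Finset.prod_eq_zero (Finset.mem_univ i) h0.symm, zero_mul]
  have hPc : ∀ ω, 0 < P ω → ∀ j, 0 < c (f ω.1 ω.2.1 j) (ω.2.2 j) := by
    intro ω h j
    refine lt_of_le_of_ne (hc0 _ _) fun h0 => h.ne' ?_
    simp only [P]
    rw [Finset.prod_eq_zero (Finset.mem_univ j) h0.symm, mul_zero]
  -- sums over Ω
  have hPsum : ∀ F : (Fin n → α) → (Fin n → β) → (Fin m → υ) → ℝ,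
      ∑ ω, P ω * F ω.1 ω.2.1 ω.2.2 = ∑ x : Fin n → α, ∑ y : Fin n → β, (∏ i, q (x i, y i)) *
        ∑ u : Fin m → υ, (∏ j, c (f x y j) (u j)) * F x y u := by
    intro F
    simp only [Ω, P, Fintype.sum_prod_type]
    refine Finset.sum_congr rfl fun x _ => Finset.sum_congr rfl fun y _ => ?_
    rw [Finset.mul_sum]
    exact Finset.sum_congr rfl fun u _ => by ring
  have hU1 : ∀ x y, ∑ u : Fin m → υ, (∏ j, c (f x y j) (u j)) = 1 := by
    intro x y
    rw [sum_prod_one (fun j => c (f x y j))]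
    simp [hc1]
  have hPsum2 : ∀ F : (Fin n → α) → (Fin n → β) → ℝ,
      ∑ ω, P ω * F ω.1 ω.2.1 = ∑ x : Fin n → α, ∑ y : Fin n → β, (∏ i, q (x i, y i)) * F x y := by
    intro F
    rw [hPsum (fun x y _ => F x y)]
    simp_rw [← Finset.sum_mul, hU1, one_mul]
  have hQ1 : ∑ x : Fin n → α, ∑ y : Fin n → β, (∏ i, q (x i, y i)) = 1 := by
    have := src_marg q hq ⟨0, hn⟩ (fun _ => 1)
    simpa [hq.2] using this
  have hP1 : ∑ ω, P ω = 1 := by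
    have := hPsum2 (fun _ _ => 1)
    simpa [hQ1] using this
  -- the averaged channel input law
  let pW := avgW q f
  have hpWe : ∀ w, pW w = emp P (fun j ω => f ω.1 ω.2.1 j) w := by
    intro w
    simp only [pW, avgW, emp]
    rw [← hPsum2 (fun x y => ∑ j, if f x y j = w then 1 else 0)]
  have hpW : IsPmf pW := by
    refine ⟨fun w => by rw [hpWe]; exact emp_nonneg P hP0 _ _, ?_⟩
    have := emp_sum P (fun j (ω : Ω) => f ω.1 ω.2.1 j) (fun _ => 1)
    simp only [mul_one, ← hpWe] at this
    rw [this, ← Finset.sum_mul, hP1]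
    simp [hm']
  let p : γ × υ → ℝ := fun t => pW t.1 * c t.1 t.2
  have hpsum : ∀ φ : γ → υ → ℝ, ∑ t : γ × υ, p t * φ t.1 t.2
      = (m : ℝ)⁻¹ * ∑ ω, P ω * ∑ j, φ (f ω.1 ω.2.1 j) (ω.2.2 j) := by
    intro φ
    have h1 : ∑ t : γ × υ, p t * φ t.1 t.2 = ∑ w, pW w * ∑ u, c w u * φ w u := by
      rw [Fintype.sum_prod_type]
      refine Finset.sum_congr rfl fun w _ => ?_
      rw [Finset.mul_sum]
      exact Finset.sum_congr rfl fun u _ => by simp only [p]; ring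
    rw [h1]
    simp_rw [hpWe]
    rw [emp_sum P (fun j (ω : Ω) => f ω.1 ω.2.1 j) (fun w => ∑ u, c w u * φ w u)]
    congr 1
    rw [hPsum2 (fun x y => ∑ j, ∑ u, c (f x y j) u * φ (f x y j) u),
      hPsum (fun x y u => ∑ j, φ (f x y j) (u j))]
    refine Finset.sum_congr rfl fun x _ => Finset.sum_congr rfl fun y _ => ?_
    congr 1
    symm
    simp_rw [Finset.mul_sum]
    rw [Finset.sum_comm]
    refine Finset.sum_congr rfl fun j _ => ?_
    exact (sum_prod_marg (fun j => c (f x y j)) (fun j => hc1 _) j (φ (f x y j)))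
  let pU : υ → ℝ := fun u => ∑ w, p (w, u)
  have hp0 : ∀ t, 0 ≤ p t := fun t => mul_nonneg (hpW.1 _) (hc0 _ _)
  have hpU0 : ∀ u, 0 ≤ pU u := fun u => Finset.sum_nonneg fun w _ => hp0 _
  have hpU1 : ∑ u, pU u = 1 := by
    simp only [pU, p]
    rw [Finset.sum_comm]
    simp_rw [← Finset.mul_sum, hc1, mul_one]
    exact hpW.2
  have hpWm : ∀ w, ∑ u, p (w, u) = pW w := by
    intro w
    simp only [p]
    rw [← Finset.mul_sum, hc1, mul_one]
  -- the averaged source law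
  let A : Fin n → Ω → α × β × ζ := fun i ω => (ω.1 i, ω.2.1 i, g (ω.2.2, ω.2.1) i)
  let r : α × β × ζ → ℝ := emp P A
  have hr0 : ∀ t, 0 ≤ r t := fun t => emp_nonneg P hP0 _ _
  have hrq : ∀ a b, ∑ z, r (a, b, z) = q (a, b) := by
    intro a b
    have h1 : ∑ z, r (a, b, z) = ∑ t, r t * (if (t.1, t.2.1) = (a, b) then 1 else 0) := by
      simp only [Fintype.sum_prod_type, Prod.mk.injEq]
      rw [Finset.sum_eq_single a, Finset.sum_eq_single b]
      · simp
      · intro b' _ hb; simp [hb]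
      · simp
      · intro a' _ ha; simp [ha]
      · simp
    rw [h1, emp_sum P A (fun t => if (t.1, t.2.1) = (a, b) then 1 else 0)]
    simp only [A]
    rw [hPsum2 (fun x y => ∑ i, if (x i, y i) = (a, b) then 1 else 0)]
    have h2 : ∀ i : Fin n, ∑ x : Fin n → α, ∑ y : Fin n → β,
        (∏ k, q (x k, y k)) * (if (x i, y i) = (a, b) then 1 else 0) = q (a, b) := by
      intro i
      rw [src_marg q hq i (fun t => if t = (a, b) then 1 else 0)]
      simp
    have h3 : ∑ x : Fin n → α, ∑ y : Fin n → β, (∏ k, q (x k, y k)) *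
        ∑ i, (if (x i, y i) = (a, b) then (1 : ℝ) else 0) = ∑ i : Fin n, q (a, b) := by
      rw [← Finset.sum_congr rfl fun i _ => h2 i]
      symm
      rw [Finset.sum_comm]
      refine Finset.sum_congr rfl fun x _ => ?_
      rw [Finset.sum_comm]
      refine Finset.sum_congr rfl fun y _ => ?_
      rw [Finset.mul_sum]
    rw [h3]
    simp [hn']
  let z0 : ζ := Classical.arbitrary ζ
  let K : α × β → ζ → ℝ := fun t z =>
    if q t = 0 then (if z = z0 then 1 else 0) else r (t.1, t.2, z) / q t
  have hK : IsCondPmf K := by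
    intro t
    simp only [K]
    by_cases h : q t = 0
    · simp only [h, if_true]
      refine ⟨fun z => ?_, by simp⟩
      dsimp only
      split_ifs <;> norm_num
    · simp only [h, if_false]
      refine ⟨fun z => div_nonneg (hr0 _) (hq0 _), ?_⟩
      rw [← Finset.sum_div, hrq]
      exact div_self h
  have hqK : ∀ a b z, q (a, b) * K (a, b) z = r (a, b, z) := by
    intro a b z
    simp only [K]
    by_cases h : q (a, b) = 0
    · simp only [h, if_true, zero_mul]
      have h1 := hrq a b
      rw [h, Finset.sum_eq_zero_iff_of_nonneg (fun z _ => hr0 _)] at h1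
      exact (h1 z (Finset.mem_univ z)).symm
    · simp only [h, if_false]
      field_simp
  refine ⟨hpW, K, hK, ?_, ?_⟩
  · simp_rw [hqK]
    have h1 := emp_sum P A (fun t => δ t.1 t.2.2)
    simp only [Fintype.sum_prod_type] at h1
    rw [show emp P A = r from rfl] at h1
    rw [h1]
    have h2 := hPsum (fun x y u => (n : ℝ)⁻¹ * ∑ i, δ (x i) (g (u, y) i))
    simp only [Finset.mul_sum] at h2 ⊢
    simp only [Ω, Fintype.sum_prod_type, P, A] at h2 ⊢
    refine Finset.sum_congr rfl fun x _ => Finset.sum_congr rfl fun y _ =>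
      Finset.sum_congr rfl fun u _ => Finset.sum_congr rfl fun i _ => by ring
  · have hKr : (fun t : α × β × ζ => q (t.1, t.2.1) * K (t.1, t.2.1) t.2.2) = r := by
      funext t; exact hqK _ _ _
    rw [hKr]
    change (n : ℝ) * condMI r ≤ m * MI p
    let qY : β → ℝ := fun b => ∑ a, q (a, b)
    let rYZ : β → ζ → ℝ := fun b z => ∑ a, r (a, b, z)
    have hcond : (n : ℝ) * condMI r = ∑ ω, P ω * ∑ i, (Real.logb 2 (r (A i ω))
        + Real.logb 2 (qY (ω.2.1 i)) - Real.logb 2 (q (ω.1 i, ω.2.1 i))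
        - Real.logb 2 (rYZ (ω.2.1 i) (g (ω.2.2, ω.2.1) i))) := by
      rw [condMI_eq]
      simp_rw [hrq]
      rw [show r = emp P A from rfl, emp_sum P A (fun t => Real.logb 2 (emp P A t)
        + Real.logb 2 (∑ a, q (a, t.2.1)) - Real.logb 2 (q (t.1, t.2.1))
        - Real.logb 2 (∑ a, emp P A (a, t.2.1, t.2.2))), mul_inv_cancel_left₀ hn']
    have hmi : (m : ℝ) * MI p = ∑ ω, P ω * ∑ j, (Real.logb 2 (p (f ω.1 ω.2.1 j, ω.2.2 j))
        - Real.logb 2 (pW (f ω.1 ω.2.1 j)) - Real.logb 2 (pU (ω.2.2 j))) := by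
      rw [MI_eq]
      simp_rw [hpWm]
      have := hpsum (fun w u => Real.logb 2 (p (w, u)) - Real.logb 2 (pW w) - Real.logb 2 (pU u))
      simp only [Prod.mk.eta] at this
      rw [this, mul_inv_cancel_left₀ hm']
    let M : Ω → ℝ := fun ω => (∏ i, qY (ω.2.1 i)) * (∏ j, pU (ω.2.2 j)) *
      ∏ i, (r (A i ω) / rYZ (ω.2.1 i) (g (ω.2.2, ω.2.1) i))
    have hqY0 : ∀ b, 0 ≤ qY b := fun b => Finset.sum_nonneg fun a _ => hq0 _
    have hrYZ0 : ∀ b z, 0 ≤ rYZ b z := fun b z => Finset.sum_nonneg fun a _ => hr0 _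
    have hM0 : ∀ ω, 0 ≤ M ω := fun ω => mul_nonneg (mul_nonneg
      (Finset.prod_nonneg fun i _ => hqY0 _) (Finset.prod_nonneg fun i _ => hpU0 _))
      (Finset.prod_nonneg fun i _ => div_nonneg (hr0 _) (hrYZ0 _ _))
    have hrpos : ∀ ω, 0 < P ω → ∀ i, 0 < r (A i ω) := fun ω h i => emp_pos P hP0 A i ω h
    have hqYpos : ∀ ω, 0 < P ω → ∀ i, 0 < qY (ω.2.1 i) := fun ω h i =>
      Finset.sum_pos' (fun a _ => hq0 _) ⟨ω.1 i, Finset.mem_univ _, hPq ω h i⟩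
    have hrYZpos : ∀ ω, 0 < P ω → ∀ i, 0 < rYZ (ω.2.1 i) (g (ω.2.2, ω.2.1) i) := fun ω h i =>
      Finset.sum_pos' (fun a _ => hr0 _) ⟨ω.1 i, Finset.mem_univ _, hrpos ω h i⟩
    have hpWpos : ∀ ω, 0 < P ω → ∀ j, 0 < pW (f ω.1 ω.2.1 j) := fun ω h j => by
      rw [hpWe]; exact emp_pos P hP0 (fun j (ω : Ω) => f ω.1 ω.2.1 j) j ω h
    have hpUpos : ∀ ω, 0 < P ω → ∀ j, 0 < pU (ω.2.2 j) := fun ω h j =>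
      Finset.sum_pos' (fun a _ => hp0 _) ⟨f ω.1 ω.2.1 j, Finset.mem_univ _,
        mul_pos (hpWpos ω h j) (hPc ω h j)⟩
    have hMpos : ∀ ω, 0 < P ω → 0 < M ω := fun ω h => mul_pos (mul_pos
      (Finset.prod_pos fun i _ => hqYpos ω h i) (Finset.prod_pos fun i _ => hpUpos ω h i))
      (Finset.prod_pos fun i _ => div_pos (hrpos ω h i) (hrYZpos ω h i))
    have hMs : ∑ ω, M ω ≤ ∑ ω, P ω := by
      rw [hP1]
      have hx : ∀ (y : Fin n → β) (u : Fin m → υ),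
          ∑ x : Fin n → α, ∏ i, (r (x i, y i, g (u, y) i) / rYZ (y i) (g (u, y) i)) ≤ 1 := by
        intro y u
        rw [sum_prod_one (fun i a => r (a, y i, g (u, y) i) / rYZ (y i) (g (u, y) i))]
        refine Finset.prod_le_one (fun i _ => Finset.sum_nonneg fun a _ =>
          div_nonneg (hr0 _) (hrYZ0 _ _)) fun i _ => ?_
        rw [← Finset.sum_div]
        exact div_self_le_one _
      have hUs : ∑ u : Fin m → υ, ∏ j, pU (u j) = 1 := by
        rw [sum_prod_one (fun _ => pU)]; simp [hpU1]
      have hYs : ∑ y : Fin n → β, ∏ i, qY (y i) = 1 := by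
        rw [sum_prod_one (fun _ => qY)]
        have : ∑ b, qY b = 1 := by
          rw [← hq.2, Fintype.sum_prod_type_right]
        simp [this]
      calc ∑ ω, M ω = ∑ yu : (Fin n → β) × (Fin m → υ), (∏ i, qY (yu.1 i)) *
            (∏ j, pU (yu.2 j)) * ∑ x : Fin n → α,
              ∏ i, (r (x i, yu.1 i, g (yu.2, yu.1) i) / rYZ (yu.1 i) (g (yu.2, yu.1) i)) := by
            rw [Fintype.sum_prod_type_right]
            refine Finset.sum_congr rfl fun yu _ => ?_
            rw [Finset.mul_sum]
        _ ≤ ∑ yu : (Fin n → β) × (Fin m → υ), (∏ i, qY (yu.1 i)) * (∏ j, pU (yu.2 j)) := by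
            refine Finset.sum_le_sum fun yu _ => mul_le_of_le_one_right (mul_nonneg
              (Finset.prod_nonneg fun i _ => hqY0 _) (Finset.prod_nonneg fun i _ => hpU0 _))
              (hx _ _)
        _ = 1 := by
            rw [Fintype.sum_prod_type]
            simp_rw [← Finset.mul_sum, hUs, mul_one]
            exact hYs
    have hg := gibbs P M hP0 hM0 hMpos hMs
    rw [← sub_nonneg, hcond, hmi, ← Finset.sum_sub_distrib]
    refine hg.trans (le_of_eq (Finset.sum_congr rfl fun ω _ => ?_))
    rcases (hP0 ω).eq_or_lt with h | h
    · rw [← h]; ring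
    · rw [← mul_sub]
      congr 1
      have e1 : Real.logb 2 (P ω) = ∑ i, Real.logb 2 (q (ω.1 i, ω.2.1 i))
          + ∑ j, Real.logb 2 (c (f ω.1 ω.2.1 j) (ω.2.2 j)) := by
        simp only [P]
        rw [Real.logb_mul (Finset.prod_pos fun i _ => hPq ω h i).ne'
          (Finset.prod_pos fun i _ => hPc ω h i).ne',
          Real.logb_prod _ _ fun i _ => (hPq ω h i).ne',
          Real.logb_prod _ _ fun i _ => (hPc ω h i).ne']
      have e2 : Real.logb 2 (M ω) = ∑ i, Real.logb 2 (qY (ω.2.1 i))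
          + ∑ j, Real.logb 2 (pU (ω.2.2 j))
          + ∑ i, (Real.logb 2 (r (A i ω))
            - Real.logb 2 (rYZ (ω.2.1 i) (g (ω.2.2, ω.2.1) i))) := by
        simp only [M]
        rw [Real.logb_mul (mul_pos (Finset.prod_pos fun i _ => hqYpos ω h i)
            (Finset.prod_pos fun i _ => hpUpos ω h i)).ne'
          (Finset.prod_pos fun i _ => div_pos (hrpos ω h i) (hrYZpos ω h i)).ne',
          Real.logb_mul (Finset.prod_pos fun i _ => hqYpos ω h i).ne'
            (Finset.prod_pos fun i _ => hpUpos ω h i).ne',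
          Real.logb_prod _ _ fun i _ => (hqYpos ω h i).ne',
          Real.logb_prod _ _ fun i _ => (hpUpos ω h i).ne',
          Real.logb_prod _ _ fun i _ => (div_pos (hrpos ω h i) (hrYZpos ω h i)).ne']
        congr 1
        exact Finset.sum_congr rfl fun i _ =>
          Real.logb_div (hrpos ω h i).ne' (hrYZpos ω h i).ne'
      have e3 : ∀ j, Real.logb 2 (p (f ω.1 ω.2.1 j, ω.2.2 j)) =
          Real.logb 2 (pW (f ω.1 ω.2.1 j)) + Real.logb 2 (c (f ω.1 ω.2.1 j) (ω.2.2 j)) := by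
        intro j
        exact Real.logb_mul (hpWpos ω h j).ne' (hPc ω h j).ne'
      rw [e1, e2]
      simp_rw [e3]
      simp only [Finset.sum_sub_distrib, Finset.sum_add_distrib]
      ring

/-! ### Continuity and compactness -/

lemma cont_H2 {T α : Type} [TopologicalSpace T] [Fintype α] (F : T → α → ℝ)
    (hF : ∀ a, Continuous fun t => F t a) : Continuous fun t => H2 (F t) := by
  unfold H2
  refine (continuous_finsetSum _ fun a _ => ?_).neg
  have : (fun t => F t a * Real.logb 2 (F t a)) =
      fun t => (F t a * Real.log (F t a)) / Real.log 2 := by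
    funext t; unfold Real.logb; ring
  rw [this]
  exact (Real.continuous_mul_log.comp (hF a)).div_const _

lemma cont_MI {T α β : Type} [TopologicalSpace T] [Fintype α] [Fintype β] (F : T → α × β → ℝ)
    (hF : ∀ a, Continuous fun t => F t a) : Continuous fun t => MI (F t) := by
  unfold MI
  refine ((cont_H2 _ fun a => ?_).add (cont_H2 _ fun b => ?_)).sub (cont_H2 _ hF)
  · exact continuous_finsetSum _ fun _ _ => hF _
  · exact continuous_finsetSum _ fun _ _ => hF _

lemma cont_condMI {T α β γ : Type} [TopologicalSpace T] [Fintype α] [Fintype β] [Fintype γ]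
    (F : T → α × β × γ → ℝ)
    (hF : ∀ a, Continuous fun t => F t a) : Continuous fun t => condMI (F t) := by
  unfold condMI
  refine (((cont_H2 _ fun a => ?_).add (cont_H2 _ fun b => ?_)).sub (cont_H2 _ hF)).sub
    (cont_H2 _ fun b => ?_)
  · exact continuous_finsetSum _ fun _ _ => hF _
  · exact continuous_finsetSum _ fun _ _ => hF _
  · exact continuous_finsetSum _ fun _ _ => continuous_finsetSum _ fun _ _ => hF _

lemma compact_pmf (α : Type) [Fintype α] : IsCompact {p : α → ℝ | IsPmf p} :=
  isCompact_stdSimplex ℝ α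

lemma compact_condPmf (α β : Type) [Fintype β] :
    IsCompact {K : α → β → ℝ | IsCondPmf K} := by
  have := isCompact_univ_pi (fun _ : α => compact_pmf β)
  convert this using 1
  ext K
  simp [IsCondPmf]

/-- conditional mutual information as a function of the test channel -/
def cmi {α β ζ : Type} [Fintype α] [Fintype β] [Fintype ζ] (q : α × β → ℝ)
    (K : α × β → ζ → ℝ) : ℝ :=
  condMI (fun t : α × β × ζ => q (t.1, t.2.1) * K (t.1, t.2.1) t.2.2)

/-- expected distortion as a function of the test channel -/
def dst {α β ζ : Type} [Fintype α] [Fintype β] [Fintype ζ] (q : α × β → ℝ) (δ : α → ζ → ℝ)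
    (K : α × β → ζ → ℝ) : ℝ :=
  ∑ x, ∑ y, ∑ z, q (x, y) * K (x, y) z * δ x z

lemma cont_cmi {α β ζ : Type} [Fintype α] [Fintype β] [Fintype ζ] (q : α × β → ℝ) :
    Continuous (cmi q : (α × β → ζ → ℝ) → ℝ) := by
  unfold cmi
  exact cont_condMI _ fun a => by fun_prop

lemma cont_dst {α β ζ : Type} [Fintype α] [Fintype β] [Fintype ζ] (q : α × β → ℝ)
    (δ : α → ζ → ℝ) : Continuous (dst q δ) := by
  unfold dst
  fun_prop

lemma condRD_le {α β ζ : Type} [Fintype α] [Fintype β] [Fintype ζ] (q : α × β → ℝ)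
    (δ : α → ζ → ℝ) (d : ℝ) (K : α × β → ζ → ℝ) (hK : IsCondPmf K) (hd : dst q δ K ≤ d) :
    condRD q δ d ≤ cmi q K := by
  unfold condRD
  refine csInf_le ?_ ⟨K, hK, hd, rfl⟩
  refine ((compact_condPmf (α × β) ζ).bddBelow_image (cont_cmi q).continuousOn).mono ?_
  rintro s ⟨K', hK', _, rfl⟩
  exact ⟨K', hK', rfl⟩

end TWRaux

open TWR in
/-- Theorem 6: if `(d1,d2)` is achievable with bandwidth
expansion `κ = κc/κs`, then there is a pmf `p_W` with
`R_{X|Y}(d1) ≤ κ·I(W;U)` and `R_{Y|X}(d2) ≤ κ·I(W;V)`. -/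
theorem jsc_cutset
    {𝒳 𝒴 Xh Yh 𝒲 𝒰 𝒱 : Type}
    [Fintype 𝒳] [Fintype 𝒴] [Fintype Xh] [Fintype Yh]
    [Fintype 𝒲] [Fintype 𝒰] [Fintype 𝒱]
    (q : 𝒳 × 𝒴 → ℝ) (hq : IsPmf q)
    (qUV : 𝒲 → 𝒰 × 𝒱 → ℝ) (hqUV : IsCondPmf qUV)
    (δ1 : 𝒳 → Xh → ℝ) (δ2 : 𝒴 → Yh → ℝ) (d1max d2max : ℝ)
    (hδ1 : ∀ x xh, 0 ≤ δ1 x xh ∧ δ1 x xh ≤ d1max)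
    (hδ2 : ∀ y yh, 0 ≤ δ2 y yh ∧ δ2 y yh ≤ d2max)
    (hδ1n : ∀ x, ∃ xh, δ1 x xh = 0) (hδ2n : ∀ y, ∃ yh, δ2 y yh = 0)
    (κs κc : ℝ) (hκs : 0 < κs) (hκc : 0 < κc)
    (d1 d2 : ℝ) (hd1 : 0 ≤ d1) (hd2 : 0 ≤ d2)
    (hach : JSCAchievable q qUV δ1 δ2 κs κc d1 d2) :
    ∃ pW : 𝒲 → ℝ, IsPmf pW ∧
      condRD q δ1 d1 ≤ (κc / κs) * chMIU qUV pW ∧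
      condRD (swap q) δ2 d2 ≤ (κc / κs) * chMIV qUV pW := by
  have hα : Nonempty (𝒳 × 𝒴) := by
    by_contra h
    rw [not_nonempty_iff] at h
    have := hq.2
    simp at this
  obtain ⟨x0, y0⟩ := hα
  haveI : Nonempty Xh := ⟨(hδ1n x0).choose⟩
  haveI : Nonempty Yh := ⟨(hδ2n y0).choose⟩
  have hsw : IsPmf (swap q) := by
    refine ⟨fun t => hq.1 _, ?_⟩
    rw [← hq.2, Fintype.sum_prod_type, Fintype.sum_prod_type_right]
    rfl
  have hcU : IsCondPmf (fun w u => ∑ v, qUV w (u, v)) := fun w =>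
    ⟨fun u => Finset.sum_nonneg fun v _ => (hqUV w).1 _, by
      rw [← Fintype.sum_prod_type']; exact (hqUV w).2⟩
  have hcV : IsCondPmf (fun w v => ∑ u, qUV w (u, v)) := fun w =>
    ⟨fun u => Finset.sum_nonneg fun v _ => (hqUV w).1 _, by
      rw [← Fintype.sum_prod_type_right']; exact (hqUV w).2⟩
  -- the single-letter bound for each code
  have step : ∀ ε > (0 : ℝ), ∃ (pW : 𝒲 → ℝ) (K1 : 𝒳 × 𝒴 → Xh → ℝ) (K2 : 𝒴 × 𝒳 → Yh → ℝ),
      IsPmf pW ∧ IsCondPmf K1 ∧ IsCondPmf K2 ∧ TWRaux.dst q δ1 K1 ≤ d1 + ε ∧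
      TWRaux.dst (swap q) δ2 K2 ≤ d2 + ε ∧ TWRaux.cmi q K1 ≤ (κc / κs) * chMIU qUV pW ∧
      TWRaux.cmi (swap q) K2 ≤ (κc / κs) * chMIV qUV pW := by
    intro ε hε
    obtain ⟨t, n, m, f, g1, g2, ht, hn, hm, h1, h2⟩ := hach ε hε
    have ht' : (0 : ℝ) < t := by exact_mod_cast ht
    have hn0 : 0 < n := by
      have : (0 : ℝ) < n := by rw [hn]; positivity
      exact_mod_cast this
    have hm0 : 0 < m := by
      have : (0 : ℝ) < m := by rw [hm]; positivity
      exact_mod_cast this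
    have hratio : ∀ a b : ℝ, (n : ℝ) * a ≤ m * b → a ≤ (κc / κs) * b := by
      intro a b h
      rw [hn, hm] at h
      rw [div_mul_eq_mul_div, le_div_iff₀ hκs]
      have : (t : ℝ) * (a * κs) ≤ t * (κc * b) := by linarith
      exact le_of_mul_le_mul_left this ht'
    obtain ⟨hp, K1, hK1, hd1', hb1⟩ := TWRaux.core q hq _ hcU hn0 hm0
      (fun x y => f (x, y)) g1 δ1
    obtain ⟨-, K2, hK2, hd2', hb2⟩ := TWRaux.core (swap q) hsw _ hcV hn0 hm0
      (fun y x => f (x, y)) g2 δ2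
    have hpe : TWRaux.avgW (swap q) (fun (y : Fin n → 𝒴) (x : Fin n → 𝒳) => f (x, y))
        = TWRaux.avgW q (fun (x : Fin n → 𝒳) (y : Fin n → 𝒴) => f (x, y)) := by
      funext w
      unfold TWRaux.avgW
      rw [Finset.sum_comm]
      rfl
    rw [hpe] at hb2
    refine ⟨_, K1, K2, hp, hK1, hK2, ?_, ?_, hratio _ _ hb1, hratio _ _ hb2⟩
    · unfold TWRaux.dst
      rw [hd1']
      refine le_trans (le_of_eq ?_) h1
      refine Finset.sum_congr rfl fun x _ => Finset.sum_congr rfl fun y _ =>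
        Finset.sum_congr rfl fun u _ => ?_
      rw [← Finset.sum_mul]
      congr 1
      unfold jscP
      rw [← Finset.mul_sum, TWRaux.sum_prod_one (fun j v => qUV (f (x, y) j) (u j, v))]
    · unfold TWRaux.dst
      rw [hd2']
      refine le_trans (le_of_eq ?_) h2
      rw [Finset.sum_comm]
      refine Finset.sum_congr rfl fun x _ => Finset.sum_congr rfl fun y _ => ?_
      rw [Finset.sum_comm (s := (Finset.univ : Finset (Fin m → 𝒰)))]
      refine Finset.sum_congr rfl fun v _ => ?_
      rw [← Finset.sum_mul]
      congr 1
      unfold jscP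
      rw [← Finset.mul_sum, TWRaux.sum_prod_one (fun j u => qUV (f (x, y) j) (u, v j))]
      rfl
  -- pass to the limit
  choose pW K1 K2 hp hK1 hK2 hd1' hd2' hb1 hb2 using
    fun k : ℕ => step (1 / ((k : ℝ) + 1)) (by positivity)
  have hcomp := (TWRaux.compact_pmf 𝒲).prod
    ((TWRaux.compact_condPmf (𝒳 × 𝒴) Xh).prod (TWRaux.compact_condPmf (𝒴 × 𝒳) Yh))
  obtain ⟨⟨a, b, c⟩, ⟨ha, hb, hc⟩, φ, hφ, hlim⟩ :=
    hcomp.tendsto_subseq (x := fun k => (pW k, K1 k, K2 k)) (fun k => ⟨hp k, hK1 k, hK2 k⟩)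
  have la : Filter.Tendsto (fun k => pW (φ k)) Filter.atTop (nhds a) :=
    (continuous_fst.tendsto _).comp hlim
  have lb : Filter.Tendsto (fun k => K1 (φ k)) Filter.atTop (nhds b) :=
    ((continuous_fst.comp continuous_snd).tendsto _).comp hlim
  have lc : Filter.Tendsto (fun k => K2 (φ k)) Filter.atTop (nhds c) :=
    ((continuous_snd.comp continuous_snd).tendsto _).comp hlim
  have le : ∀ d : ℝ, Filter.Tendsto (fun k => d + 1 / ((φ k : ℝ) + 1)) Filter.atTop (nhds d) := by
    intro d
    have := (tendsto_one_div_add_atTop_nhds_zero_nat (𝕜 := ℝ)).comp hφ.tendsto_atTop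
    simpa using this.const_add d
  have cU : Continuous fun p : 𝒲 → ℝ => (κc / κs) * chMIU qUV p := by
    unfold chMIU
    exact (TWRaux.cont_MI _ fun t => by fun_prop).const_mul _
  have cV : Continuous fun p : 𝒲 → ℝ => (κc / κs) * chMIV qUV p := by
    unfold chMIV
    exact (TWRaux.cont_MI _ fun t => by fun_prop).const_mul _
  refine ⟨a, ha, ?_, ?_⟩
  · refine (TWRaux.condRD_le q δ1 d1 b hb ?_).trans ?_
    · exact le_of_tendsto_of_tendsto' (((TWRaux.cont_dst q δ1).tendsto b).comp lb) (le d1)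
        fun k => hd1' (φ k)
    · exact le_of_tendsto_of_tendsto' (((TWRaux.cont_cmi q).tendsto b).comp lb)
        ((cU.tendsto a).comp la) fun k => hb1 (φ k)
  · refine (TWRaux.condRD_le (swap q) δ2 d2 c hc ?_).trans ?_
    · exact le_of_tendsto_of_tendsto' (((TWRaux.cont_dst (swap q) δ2).tendsto c).comp lc) (le d2)
        fun k => hd2' (φ k)
    · exact le_of_tendsto_of_tendsto' (((TWRaux.cont_cmi (swap q)).tendsto c).comp lc)
        ((cV.tendsto a).comp la) fun k => hb2 (φ k)
end
end
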